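/- Let σ ∈ (1/2, 1) and 0 < α < 2σ − 1. Suppose u : R^n → R is continuous, |u(x)| ≤ 1 + |x|^{1+α} for all x, and u satisfies (−Δ)^σ u = 0 in R^n in the viscosity sense. Then u is an affine function. -/

import Mathlib

open MeasureTheory Metric Filter Set
open scoped RealInnerProductSpace Topology

/-- The truncated integral whose limit as `δ → 0⁺` is the principal value of
`Δ^σ u (y) = p.v. ∫ (u(x) − u(y)) |x − y|^{-(n+2σ)} dx`. -/
noncomputable def truncatedFracLap (n : ℕ) (σ : ℝ) (u : EuclideanSpace ℝ (Fin n) → ℝ)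
    (y : EuclideanSpace ℝ (Fin n)) (δ : ℝ) : ℝ :=
  ∫ x in {x : EuclideanSpace ℝ (Fin n) | δ ≤ dist x y},
    (u x - u y) / dist x y ^ ((n : ℝ) + 2 * σ)

/-- `φ` is a smooth function touching `u` from below at `y` (locally). -/
def TouchesBelow (n : ℕ) (u φ : EuclideanSpace ℝ (Fin n) → ℝ)
    (y : EuclideanSpace ℝ (Fin n)) : Prop :=
  ContDiff ℝ (⊤ : ℕ∞) φ ∧ φ y = u y ∧ ∃ r > (0:ℝ), ∀ x ∈ ball y r, φ x ≤ u x

/-- `φ` is a smooth function touching `u` from above at `y` (locally). -/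
def TouchesAbove (n : ℕ) (u φ : EuclideanSpace ℝ (Fin n) → ℝ)
    (y : EuclideanSpace ℝ (Fin n)) : Prop :=
  ContDiff ℝ (⊤ : ℕ∞) φ ∧ φ y = u y ∧ ∃ r > (0:ℝ), ∀ x ∈ ball y r, u x ≤ φ x

/-!
Let `P_t` be the heat semigroup. Since `κ ‖z‖^{-(n+2σ)} = ∫₀^∞ G_t(z) t^{-1-σ} dt` for the heat
kernel `G_t`, the fractional Laplacian is `Δ^σ u = κ⁻¹ ∫₀^∞ (P_t u - u) t^{-1-σ} dt`, and the
equation for `F(s) = P_s u(x)` reads `∫₀^∞ (F(s+t) - F(s)) t^{-1-σ} dt = 0` for all `s > 0`: the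
one-sided (Marchaud) derivative of order `σ` of `F` vanishes.

For a viscosity subsolution the inequality `≥ 0` holds up to an error `O(τ^{1-σ}/ε)` for the
sup-convolution of `u` with parameter `ε` and the integral over `t > τ`, because a paraboloid of
opening `1/ε` touches `u` from above at the point realising the sup-convolution. Applying `P_s` to
this pointwise inequality and letting first `τ → 0` and then `ε → 0` gives it for `F`.

The increments `F(s+h) - F(s)` tend to `0` as `s → ∞`, so at a positive maximum of such an increment
its Marchaud derivative would be negative. Hence `F` is constant, that is `P_s u = u` for all `s`.
The second differences of `P_s u` are `O(s^{p/2-1})` when `u` grows like `‖x‖^p` with `p < 2`, so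
those of `u` vanish and `u` is affine.
-/

namespace FracLiouville

section Weight

variable {E : Type*} [SeminormedAddCommGroup E]

lemma one_add_norm_add_rpow_le {p : ℝ} (hp : 0 ≤ p) (x y : E) :
    (1 + ‖x + y‖) ^ p ≤ (1 + ‖x‖) ^ p * (1 + ‖y‖) ^ p := by
  rw [← Real.mul_rpow (by positivity) (by positivity)]
  refine Real.rpow_le_rpow (by positivity) ?_ hp
  nlinarith [norm_add_le x y, norm_nonneg x, norm_nonneg y]

lemma one_le_one_add_norm_rpow {p : ℝ} (hp : 0 ≤ p) (x : E) : 1 ≤ (1 + ‖x‖) ^ p :=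
  Real.one_le_rpow (by linarith [norm_nonneg x]) hp

lemma one_add_norm_rpow_le_two_mul {p : ℝ} (hp : 0 ≤ p) (x : E) :
    1 + ‖x‖ ^ p ≤ 2 * (1 + ‖x‖) ^ p := by
  have hle : ‖x‖ ^ p ≤ (1 + ‖x‖) ^ p := Real.rpow_le_rpow (norm_nonneg x) (by linarith) hp
  linarith [one_le_one_add_norm_rpow hp x]

lemma one_add_rpow_le_exp {q b r : ℝ} (hq : 0 ≤ q) (hb : 0 < b) (hr : 0 ≤ r) :
    (1 + r) ^ q ≤ Real.exp (q ^ 2 / (2 * b)) * Real.exp (b / 2 * r ^ 2) := by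
  have young : r * q ≤ q ^ 2 / (2 * b) + b / 2 * r ^ 2 := by
    have : q ^ 2 / (2 * b) + b / 2 * r ^ 2 - r * q = (q - b * r) ^ 2 / (2 * b) := by
      field_simp; ring
    linarith [show 0 ≤ (q - b * r) ^ 2 / (2 * b) by positivity]
  calc (1 + r) ^ q ≤ Real.exp r ^ q :=
        Real.rpow_le_rpow (by positivity) (by linarith [Real.add_one_le_exp r]) hq
    _ = Real.exp (r * q) := (Real.exp_mul r q).symm
    _ ≤ _ := by rw [← Real.exp_add]; exact Real.exp_le_exp.2 young

end Weight

section Growth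

variable {E : Type*} [SeminormedAddCommGroup E] [MeasurableSpace E]

/-- The functions that can be averaged against the heat kernel: `w` is measurable and has polynomial
growth of order `p` with constant `A`. The weight `(1 + ‖x‖)^p` is preferred to `1 + ‖x‖^p` because
it is submultiplicative under translations. -/
structure HasGrowth (p A : ℝ) (w : E → ℝ) : Prop where
  measurable : Measurable w
  abs_le : ∀ x, |w x| ≤ A * (1 + ‖x‖) ^ p

variable {p A : ℝ} {w : E → ℝ}

lemma HasGrowth.nonneg (hw : HasGrowth p A w) : 0 ≤ A := by
  simpa using (abs_nonneg _).trans (hw.abs_le 0)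

lemma HasGrowth.abs_translate_le (hp : 0 ≤ p) (hw : HasGrowth p A w) (x y : E) :
    |w (x + y)| ≤ A * (1 + ‖x‖) ^ p * (1 + ‖y‖) ^ p := by
  refine (hw.abs_le _).trans ?_
  rw [mul_assoc]
  exact mul_le_mul_of_nonneg_left (one_add_norm_add_rpow_le hp x y) hw.nonneg

lemma HasGrowth.neg (hw : HasGrowth p A w) : HasGrowth p A (fun x => -w x) :=
  ⟨hw.measurable.neg, fun x => by rw [abs_neg]; exact hw.abs_le x⟩

lemma HasGrowth.indicator (hw : HasGrowth p A w) {s : Set E} (hs : MeasurableSet s) :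
    HasGrowth p A (s.indicator w) :=
  ⟨hw.measurable.indicator hs, fun x => by
    simpa only [← Real.norm_eq_abs] using (norm_indicator_le_norm_self w x).trans (hw.abs_le x)⟩

lemma HasGrowth.norm_mul_le (hp : 0 ≤ p) (hw : HasGrowth p A w) {k c g : ℝ} (hk : |k| ≤ c * g)
    (x y : E) :
    ‖w (x + y) * k‖ ≤ A * (1 + ‖x‖) ^ p * c * (‖y‖ ^ 0 * (1 + ‖y‖) ^ p * g) := by
  have hA := hw.nonneg
  rw [norm_mul]
  calc |w (x + y)| * |k| ≤ A * (1 + ‖x‖) ^ p * (1 + ‖y‖) ^ p * (c * g) :=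
        mul_le_mul (hw.abs_translate_le hp x y) hk (abs_nonneg _) (by positivity)
    _ = _ := by ring

variable [BorelSpace E]

lemma HasGrowth.increment (hp : 0 ≤ p) (hw : HasGrowth p A w) (x : E) :
    HasGrowth p (2 * (A * (1 + ‖x‖) ^ p)) (fun z => w (x + z) - w x) := by
  refine ⟨(hw.measurable.comp (measurable_const_add x)).sub_const _, fun z => ?_⟩
  have hA := hw.nonneg
  calc |w (x + z) - w x| ≤ |w (x + z)| + |w x| := abs_sub _ _
    _ ≤ A * (1 + ‖x‖) ^ p * (1 + ‖z‖) ^ p + A * (1 + ‖x‖) ^ p * 1 := by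
        rw [mul_one]; exact add_le_add (hw.abs_translate_le hp x z) (hw.abs_le x)
    _ ≤ A * (1 + ‖x‖) ^ p * (1 + ‖z‖) ^ p + A * (1 + ‖x‖) ^ p * (1 + ‖z‖) ^ p := by
        gcongr; exact one_le_one_add_norm_rpow hp z
    _ = _ := by ring

end Growth

variable {V : Type*} [NormedAddCommGroup V] [InnerProductSpace ℝ V]

lemma norm_pow_mul_one_add_norm_rpow_smul_le {q : ℝ} (hq : 0 ≤ q) (k : ℕ) {r : ℝ} (hr : 0 ≤ r)
    (z : V) :
    ‖r • z‖ ^ k * (1 + ‖r • z‖) ^ q ≤ r ^ k * (1 + r) ^ q * (1 + ‖z‖) ^ (q + k) := by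
  have hz := norm_nonneg z
  have hweight : (1 + r * ‖z‖) ^ q ≤ (1 + r) ^ q * (1 + ‖z‖) ^ q := by
    rw [← Real.mul_rpow (by positivity) (by positivity)]
    exact Real.rpow_le_rpow (by positivity) (by nlinarith) hq
  have hpow : ‖z‖ ^ k ≤ (1 + ‖z‖) ^ k := pow_le_pow_left₀ hz (by linarith) k
  rw [norm_smul, Real.norm_of_nonneg hr, mul_pow, Real.rpow_add (by positivity),
    Real.rpow_natCast]
  calc _ ≤ r ^ k * (1 + ‖z‖) ^ k * ((1 + r) ^ q * (1 + ‖z‖) ^ q) := by gcongr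
    _ = _ := by ring

/-- The Gaussian density of variance `t` on a Euclidean space, i.e. the fundamental solution of
`∂ₜ = ½ Δ`; for `t ≤ 0` its value is meaningless. -/
noncomputable def heatKernel (t : ℝ) (z : V) : ℝ :=
  (2 * Real.pi * t) ^ (-(Module.finrank ℝ V : ℝ) / 2) * Real.exp (-‖z‖ ^ 2 / (2 * t))

section Kernel

lemma heatKernel_pos {t : ℝ} (ht : 0 < t) (z : V) : 0 < heatKernel t z := by
  unfold heatKernel; positivity

lemma abs_heatKernel_le {t : ℝ} (ht : 0 < t) (y : V) : |heatKernel t y| ≤ 1 * heatKernel t y := by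
  rw [one_mul, abs_of_pos (heatKernel_pos ht y)]

lemma heatKernel_neg (t : ℝ) (z : V) : heatKernel t (-z) = heatKernel t z := by
  simp only [heatKernel, norm_neg]

lemma heatKernel_eq (t : ℝ) (z : V) :
    heatKernel t z = (2 * Real.pi * t) ^ (-(Module.finrank ℝ V : ℝ) / 2) *
      Real.exp (-(1 / (2 * t)) * ‖z‖ ^ 2) := by
  unfold heatKernel; congr 2; ring

lemma heatKernel_sqrt_smul {t : ℝ} (ht : 0 < t) (z : V) :
    heatKernel t (√t • z) = (√t ^ Module.finrank ℝ V)⁻¹ * heatKernel 1 z := by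
  have hexp : -‖√t • z‖ ^ 2 / (2 * t) = -‖z‖ ^ 2 / (2 * 1) := by
    rw [norm_smul, mul_pow, Real.norm_eq_abs, sq_abs, Real.sq_sqrt ht.le]; field_simp
  have hdim : (√t ^ Module.finrank ℝ V)⁻¹ = t ^ (-(Module.finrank ℝ V : ℝ) / 2) := by
    rw [Real.sqrt_eq_rpow, ← Real.rpow_natCast, ← Real.rpow_mul ht.le, ← Real.rpow_neg ht.le]
    congr 1; ring
  rw [heatKernel, heatKernel, hexp, hdim, Real.mul_rpow (by positivity) ht.le]
  ring_nf

variable [MeasurableSpace V] [BorelSpace V]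

lemma measurable_uncurry_heatKernel :
    Measurable (fun q : ℝ × V => heatKernel q.1 q.2) := by
  unfold heatKernel; fun_prop

@[fun_prop]
lemma measurable_heatKernel (t : ℝ) : Measurable (heatKernel t : V → ℝ) :=
  measurable_uncurry_heatKernel.comp measurable_prodMk_left

variable [FiniteDimensional ℝ V]

lemma integrable_exp_neg_mul_norm_sq {b : ℝ} (hb : 0 < b) :
    Integrable (fun z : V => Real.exp (-b * ‖z‖ ^ 2)) := by
  refine not_imp_comm.1 integral_undef ?_
  rw [GaussianFourier.integral_rexp_neg_mul_sq_norm hb]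
  positivity

lemma integral_heatKernel {t : ℝ} (ht : 0 < t) : ∫ z : V, heatKernel t z = 1 := by
  simp_rw [heatKernel_eq]
  rw [integral_const_mul, GaussianFourier.integral_rexp_neg_mul_sq_norm (by positivity),
    show Real.pi / (1 / (2 * t)) = 2 * Real.pi * t by field_simp, neg_div,
    Real.rpow_neg (by positivity)]
  exact inv_mul_cancel₀ (by positivity)

lemma integral_mul_heatKernel {t : ℝ} (ht : 0 < t) (f : V → ℝ) :
    ∫ y, f y * heatKernel t y = ∫ z, f (√t • z) * heatKernel 1 z := by
  have hpos : 0 < √t ^ Module.finrank ℝ V := by positivity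
  have h := Measure.integral_comp_smul (volume : Measure V) (fun y => f y * heatKernel t y) (√t)
  simp_rw [heatKernel_sqrt_smul ht, mul_left_comm (f _)] at h
  rw [integral_const_mul, abs_of_pos (by positivity), smul_eq_mul] at h
  exact (mul_left_cancel₀ (inv_ne_zero hpos.ne') h).symm

lemma integrable_mul_heatKernel_iff {t : ℝ} (ht : 0 < t) (f : V → ℝ) :
    Integrable (fun y => f y * heatKernel t y) ↔
      Integrable (fun z => f (√t • z) * heatKernel 1 z) := by
  have hpos : 0 < √t ^ Module.finrank ℝ V := by positivity
  rw [← integrable_comp_smul_iff volume (fun y => f y * heatKernel t y)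
    (by positivity : √t ≠ 0)]
  simp_rw [heatKernel_sqrt_smul ht, mul_left_comm (f _)]
  exact integrable_const_mul_iff (IsUnit.mk0 _ (inv_ne_zero hpos.ne')) _

end Kernel

section Moment

variable (V) [MeasurableSpace V] [BorelSpace V] [FiniteDimensional ℝ V]

/-- The moment `∫ (1 + ‖z‖)^q` of the standard Gaussian, through which all constants below are
expressed. -/
noncomputable def gaussianMoment (q : ℝ) : ℝ :=
  ∫ z : V, (1 + ‖z‖) ^ q * heatKernel 1 z

lemma gaussianMoment_nonneg (q : ℝ) : 0 ≤ gaussianMoment V q :=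
  integral_nonneg fun z => by have := heatKernel_pos one_pos z; positivity

variable {V}

lemma integrable_one_add_norm_rpow_mul_heatKernel {q : ℝ} (hq : 0 ≤ q) :
    Integrable (fun z : V => (1 + ‖z‖) ^ q * heatKernel 1 z) := by
  have hI : Integrable (fun z : V => Real.exp (q ^ 2 / (2 * (1 / 2))) *
      (2 * Real.pi * 1) ^ (-(Module.finrank ℝ V : ℝ) / 2) * Real.exp (-(1 / 4) * ‖z‖ ^ 2)) :=
    (integrable_exp_neg_mul_norm_sq (by norm_num)).const_mul _
  refine hI.mono' (by fun_prop) (.of_forall fun z => ?_)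
  have hG := heatKernel_pos one_pos z
  rw [Real.norm_of_nonneg (by positivity)]
  calc _ ≤ Real.exp (q ^ 2 / (2 * (1 / 2))) * Real.exp (1 / 2 / 2 * ‖z‖ ^ 2) * heatKernel 1 z := by
        gcongr; exact one_add_rpow_le_exp hq (by norm_num) (norm_nonneg z)
    _ = _ := by
        rw [heatKernel_eq, show -(1 / 4 : ℝ) * ‖z‖ ^ 2
          = 1 / 2 / 2 * ‖z‖ ^ 2 + -(1 / (2 * 1)) * ‖z‖ ^ 2 by ring, Real.exp_add]
        ring

lemma integrable_norm_pow_mul_heatKernel {q : ℝ} (hq : 0 ≤ q) (k : ℕ) {t : ℝ} (ht : 0 < t) :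
    Integrable (fun y : V => ‖y‖ ^ k * (1 + ‖y‖) ^ q * heatKernel t y) := by
  rw [integrable_mul_heatKernel_iff ht (fun y => ‖y‖ ^ k * (1 + ‖y‖) ^ q)]
  refine ((integrable_one_add_norm_rpow_mul_heatKernel (V := V)
    (by positivity : 0 ≤ q + k)).const_mul (√t ^ k * (1 + √t) ^ q)).mono' (by fun_prop)
    (.of_forall fun z => ?_)
  have hG := heatKernel_pos one_pos z
  rw [Real.norm_of_nonneg (by positivity), ← mul_assoc]
  exact mul_le_mul_of_nonneg_right
    (norm_pow_mul_one_add_norm_rpow_smul_le hq k (by positivity) z) hG.le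

lemma integral_norm_pow_mul_heatKernel_le {q : ℝ} (hq : 0 ≤ q) (k : ℕ) {t : ℝ} (ht : 0 < t) :
    ∫ y : V, ‖y‖ ^ k * (1 + ‖y‖) ^ q * heatKernel t y ≤
      √t ^ k * (1 + √t) ^ q * gaussianMoment V (q + k) := by
  rw [integral_mul_heatKernel ht (fun y => ‖y‖ ^ k * (1 + ‖y‖) ^ q), gaussianMoment,
    ← integral_const_mul]
  refine integral_mono ((integrable_mul_heatKernel_iff ht _).1
    (integrable_norm_pow_mul_heatKernel hq k ht))
    ((integrable_one_add_norm_rpow_mul_heatKernel (by positivity)).const_mul _) fun z => ?_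
  have hG := heatKernel_pos one_pos z
  simp only [← mul_assoc]
  exact mul_le_mul_of_nonneg_right
    (norm_pow_mul_one_add_norm_rpow_smul_le hq k (by positivity) z) hG.le

lemma integrable_heatKernel {t : ℝ} (ht : 0 < t) : Integrable (heatKernel t : V → ℝ) := by
  simpa using integrable_norm_pow_mul_heatKernel (V := V) le_rfl 0 ht

end Moment

section HeatFlow

variable [MeasurableSpace V] [BorelSpace V] [FiniteDimensional ℝ V]

/-- The heat semigroup: `heatFlow t w x` is the average of `w` against the Gaussian density of
variance `t` centred at `x`. -/
noncomputable def heatFlow (t : ℝ) (w : V → ℝ) (x : V) : ℝ :=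
  ∫ y, w (x + y) * heatKernel t y

variable {p A : ℝ} {w : V → ℝ}

lemma HasGrowth.integrable_mul (hp : 0 ≤ p) (hw : HasGrowth p A w) {t c : ℝ} (ht : 0 < t)
    {K : V → ℝ} (hKm : Measurable K) (hK : ∀ y, |K y| ≤ c * heatKernel t y) (x : V) :
    Integrable (fun y => w (x + y) * K y) :=
  ((integrable_norm_pow_mul_heatKernel hp 0 ht).const_mul (A * (1 + ‖x‖) ^ p * c)).mono'
    ((hw.measurable.comp (measurable_const_add x)).mul hKm).aestronglyMeasurable
    (.of_forall fun y => hw.norm_mul_le hp (hK y) x y)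

lemma HasGrowth.abs_integral_mul_le (hp : 0 ≤ p) (hw : HasGrowth p A w) {t c : ℝ} (ht : 0 < t)
    {K : V → ℝ} (hK : ∀ y, |K y| ≤ c * heatKernel t y) (x : V) :
    |∫ y, w (x + y) * K y| ≤ A * (1 + ‖x‖) ^ p * c * ((1 + √t) ^ p * gaussianMoment V p) := by
  have hA := hw.nonneg
  have hc : 0 ≤ c :=
    nonneg_of_mul_nonneg_left ((abs_nonneg _).trans (hK 0)) (heatKernel_pos ht 0)
  refine (norm_integral_le_of_norm_le
    ((integrable_norm_pow_mul_heatKernel hp 0 ht).const_mul (A * (1 + ‖x‖) ^ p * c))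
    (.of_forall fun y => hw.norm_mul_le hp (hK y) x y)).trans ?_
  rw [integral_const_mul]
  gcongr
  simpa using integral_norm_pow_mul_heatKernel_le (V := V) hp 0 ht

lemma HasGrowth.integrable_mul_heatKernel (hp : 0 ≤ p) (hw : HasGrowth p A w) {t : ℝ} (ht : 0 < t)
    (x : V) : Integrable (fun y => w (x + y) * heatKernel t y) :=
  hw.integrable_mul hp ht (measurable_heatKernel t) (abs_heatKernel_le ht) x

lemma HasGrowth.abs_heatFlow_le (hp : 0 ≤ p) (hw : HasGrowth p A w) {t : ℝ} (ht : 0 < t) (x : V) :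
    |heatFlow t w x| ≤ A * (1 + ‖x‖) ^ p * ((1 + √t) ^ p * gaussianMoment V p) := by
  simpa only [heatFlow, mul_one] using hw.abs_integral_mul_le hp ht (abs_heatKernel_le ht) x

lemma measurable_uncurry_heatFlow (hw : Measurable w) :
    Measurable (fun q : ℝ × V => heatFlow q.1 w q.2) := by
  have hK : Measurable (fun a : (ℝ × V) × V => heatKernel a.1.1 a.2) :=
    measurable_uncurry_heatKernel.comp (by fun_prop : Measurable fun a : (ℝ × V) × V =>
      (a.1.1, a.2))
  have hm : Measurable fun a : (ℝ × V) × V => w (a.1.2 + a.2) * heatKernel a.1.1 a.2 := by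
    fun_prop
  exact (hm.stronglyMeasurable.integral_prod_right (ν := volume)).measurable

lemma HasGrowth.hasGrowth_heatFlow (hp : 0 ≤ p) (hw : HasGrowth p A w) {t : ℝ} (ht : 0 < t) :
    HasGrowth p (A * ((1 + √t) ^ p * gaussianMoment V p)) (heatFlow t w) :=
  ⟨(measurable_uncurry_heatFlow hw.measurable).comp measurable_prodMk_left, fun x =>
    (hw.abs_heatFlow_le hp ht x).trans_eq (by ring)⟩

lemma heatFlow_neg (t : ℝ) (w : V → ℝ) (x : V) :
    heatFlow t (fun y => -w y) x = -heatFlow t w x := by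
  simp only [heatFlow, neg_mul, integral_neg]

lemma HasGrowth.heatFlow_mono {B : ℝ} {v : V → ℝ} (hp : 0 ≤ p) (hv : HasGrowth p A v)
    (hw : HasGrowth p B w) {t : ℝ} (ht : 0 < t) (hvw : ∀ y, v y ≤ w y) (x : V) :
    heatFlow t v x ≤ heatFlow t w x :=
  integral_mono (hv.integrable_mul_heatKernel hp ht x) (hw.integrable_mul_heatKernel hp ht x)
    fun y => mul_le_mul_of_nonneg_right (hvw (x + y)) (heatKernel_pos ht y).le

lemma heatFlow_apply_zero (t : ℝ) (w : V → ℝ) :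
    heatFlow t w 0 = ∫ y, w y * heatKernel t y := by
  simp only [heatFlow, zero_add]

lemma HasGrowth.heatFlow_increment (hp : 0 ≤ p) (hw : HasGrowth p A w) {t : ℝ} (ht : 0 < t)
    (x : V) : heatFlow t (fun z => w (x + z) - w x) 0 = heatFlow t w x - w x := by
  simp only [heatFlow_apply_zero, sub_mul]
  rw [integral_sub (hw.integrable_mul_heatKernel hp ht x) ((integrable_heatKernel ht).const_mul _),
    integral_const_mul, integral_heatKernel ht, mul_one, heatFlow]

lemma tendsto_heatFlow_of_hasGrowth {ι : Type*} {l : Filter ι} [l.IsCountablyGenerated]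
    (hp : 0 ≤ p) {W : ι → V → ℝ} (hW : ∀ᶠ i in l, HasGrowth p A (W i))
    (hlim : ∀ y, Tendsto (fun i => W i y) l (𝓝 (w y))) {t : ℝ} (ht : 0 < t) (x : V) :
    Tendsto (fun i => heatFlow t (W i) x) l (𝓝 (heatFlow t w x)) := by
  refine tendsto_integral_filter_of_dominated_convergence
    (fun y => A * (1 + ‖x‖) ^ p * 1 * (‖y‖ ^ 0 * (1 + ‖y‖) ^ p * heatKernel t y)) ?_ ?_
    ((integrable_norm_pow_mul_heatKernel hp 0 ht).const_mul _)
    (.of_forall fun y => (hlim _).mul_const _)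
  · filter_upwards [hW] with i hi
    exact (hi.integrable_mul_heatKernel hp ht x).aestronglyMeasurable
  · filter_upwards [hW] with i hi
    exact .of_forall fun y => hi.norm_mul_le hp (abs_heatKernel_le ht y) x y

lemma HasGrowth.continuous_integral_sqrt_smul (hp : 0 ≤ p) (hw : HasGrowth p A w)
    (hcont : Continuous w) (x : V) :
    Continuous fun t : ℝ => ∫ z, w (x + √t • z) * heatKernel 1 z := by
  have hA := hw.nonneg
  refine continuous_iff_continuousAt.2 fun t₀ => ?_
  have hnear : ∀ᶠ t in 𝓝 t₀, √t ≤ √t₀ + 1 :=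
    (Real.continuous_sqrt.tendsto t₀).eventually (Iic_mem_nhds (by linarith))
  refine continuousAt_of_dominated
    (bound := fun z => A * (1 + ‖x‖) ^ p * (1 + (√t₀ + 1)) ^ p * ((1 + ‖z‖) ^ p * heatKernel 1 z))
    (.of_forall fun t => (by have := hw.measurable; fun_prop)) ?_
    ((integrable_one_add_norm_rpow_mul_heatKernel hp).const_mul _) (.of_forall fun z => ?_)
  · filter_upwards [hnear] with t ht
    refine .of_forall fun z => ?_
    have hG := heatKernel_pos one_pos z
    have hsmul := norm_pow_mul_one_add_norm_rpow_smul_le hp 0 (Real.sqrt_nonneg t) z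
    simp only [pow_zero, one_mul, Nat.cast_zero, add_zero] at hsmul
    rw [norm_mul, Real.norm_of_nonneg hG.le, ← mul_assoc]
    gcongr
    calc |w (x + √t • z)| ≤ A * (1 + ‖x‖) ^ p * (1 + ‖√t • z‖) ^ p := hw.abs_translate_le hp _ _
      _ ≤ A * (1 + ‖x‖) ^ p * ((1 + √t) ^ p * (1 + ‖z‖) ^ p) := by gcongr
      _ ≤ A * (1 + ‖x‖) ^ p * ((1 + (√t₀ + 1)) ^ p * (1 + ‖z‖) ^ p) := by gcongr
      _ = _ := by ring
  · exact (by fun_prop : Continuous fun t : ℝ => w (x + √t • z) * heatKernel 1 z).continuousAt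

lemma heatFlow_eq_integral_sqrt_smul {t : ℝ} (ht : 0 < t) (w : V → ℝ) (x : V) :
    heatFlow t w x = ∫ z, w (x + √t • z) * heatKernel 1 z :=
  integral_mul_heatKernel ht fun y => w (x + y)

lemma HasGrowth.continuousOn_heatFlow (hp : 0 ≤ p) (hw : HasGrowth p A w) (hcont : Continuous w)
    (x : V) : ContinuousOn (fun t => heatFlow t w x) (Ioi 0) :=
  (hw.continuous_integral_sqrt_smul hp hcont x).continuousOn.congr fun _ ht =>
    heatFlow_eq_integral_sqrt_smul ht w x

lemma HasGrowth.tendsto_heatFlow_zero (hp : 0 ≤ p) (hw : HasGrowth p A w) (hcont : Continuous w)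
    (x : V) : Tendsto (fun t => heatFlow t w x) (𝓝[>] 0) (𝓝 (w x)) := by
  have hlim := (hw.continuous_integral_sqrt_smul hp hcont x).tendsto 0
  simp only [Real.sqrt_zero, zero_smul, add_zero, integral_const_mul, integral_heatKernel one_pos,
    mul_one] at hlim
  refine (hlim.mono_left nhdsWithin_le_nhds).congr' ?_
  filter_upwards [self_mem_nhdsWithin] with t ht
  exact (heatFlow_eq_integral_sqrt_smul ht w x).symm

end HeatFlow

section Semigroup

-- Completing the square: the posterior of a Gaussian prior under a Gaussian observation.
lemma heatKernel_sub_mul_heatKernel {s t : ℝ} (hs : 0 < s) (ht : 0 < t) (z y : V) :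
    heatKernel t (z - y) * heatKernel s y =
      heatKernel (s + t) z * heatKernel (s * t / (s + t)) (y - (s / (s + t)) • z) := by
  have hexp : -‖z - y‖ ^ 2 / (2 * t) + -‖y‖ ^ 2 / (2 * s) = -‖z‖ ^ 2 / (2 * (s + t)) +
      -‖y - (s / (s + t)) • z‖ ^ 2 / (2 * (s * t / (s + t))) := by
    rw [norm_sub_sq_real, norm_sub_sq_real, inner_smul_right, norm_smul, mul_pow,
      real_inner_comm z y, Real.norm_eq_abs, sq_abs]
    field_simp
    ring
  have hprod : 2 * Real.pi * t * (2 * Real.pi * s) =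
      2 * Real.pi * (s + t) * (2 * Real.pi * (s * t / (s + t))) := by field_simp
  unfold heatKernel
  rw [mul_mul_mul_comm, ← Real.mul_rpow (by positivity) (by positivity), ← Real.exp_add, hexp,
    hprod, Real.mul_rpow (by positivity) (by positivity), Real.exp_add, mul_mul_mul_comm]

variable [MeasurableSpace V] [BorelSpace V] [FiniteDimensional ℝ V]

lemma integrable_heatKernel_sub_mul_heatKernel {s t : ℝ} (hs : 0 < s) (ht : 0 < t) (z : V) :
    Integrable (fun y => heatKernel t (z - y) * heatKernel s y) := by
  simp_rw [heatKernel_sub_mul_heatKernel hs ht]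
  exact ((integrable_heatKernel (by positivity)).comp_sub_right _).const_mul _

lemma integral_heatKernel_sub_mul_heatKernel {s t : ℝ} (hs : 0 < s) (ht : 0 < t) (z : V) :
    ∫ y, heatKernel t (z - y) * heatKernel s y = heatKernel (s + t) z := by
  simp_rw [heatKernel_sub_mul_heatKernel hs ht]
  rw [integral_const_mul, integral_sub_right_eq_self, integral_heatKernel (by positivity), mul_one]

variable {p A : ℝ} {w : V → ℝ}

lemma heatFlow_add_eq_integral (t : ℝ) (w : V → ℝ) (x y : V) :
    heatFlow t w (x + y) = ∫ z, w (x + z) * heatKernel t (z - y) := by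
  rw [heatFlow, ← integral_sub_right_eq_self _ y]
  congr! 4
  abel

lemma HasGrowth.integrable_prod_heatKernel (hp : 0 ≤ p) (hw : HasGrowth p A w) {s t : ℝ}
    (hs : 0 < s) (ht : 0 < t) (x : V) :
    Integrable (Function.uncurry fun y z => w (x + z) * (heatKernel t (z - y) * heatKernel s y))
      (volume.prod volume) := by
  have hm : Measurable (Function.uncurry fun y z =>
      w (x + z) * (heatKernel t (z - y) * heatKernel s y)) := by
    have := hw.measurable
    unfold Function.uncurry
    fun_prop
  refine (integrable_prod_iff' hm.aestronglyMeasurable).2 ⟨.of_forall fun z =>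
    (integrable_heatKernel_sub_mul_heatKernel hs ht z).const_mul (w (x + z)), ?_⟩
  refine (hw.integrable_mul_heatKernel hp (add_pos hs ht) x).norm.congr (.of_forall fun z => ?_)
  simp only [Function.uncurry, norm_mul, integral_const_mul,
    Real.norm_of_nonneg (heatKernel_pos ht _).le, Real.norm_of_nonneg (heatKernel_pos hs _).le,
    Real.norm_of_nonneg (heatKernel_pos (add_pos hs ht) _).le,
    integral_heatKernel_sub_mul_heatKernel hs ht]

lemma HasGrowth.heatFlow_heatFlow (hp : 0 ≤ p) (hw : HasGrowth p A w) {s t : ℝ} (hs : 0 < s)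
    (ht : 0 < t) (x : V) :
    heatFlow s (heatFlow t w) x = heatFlow (s + t) w x := by
  calc heatFlow s (heatFlow t w) x
      = ∫ y, ∫ z, w (x + z) * (heatKernel t (z - y) * heatKernel s y) := by
        rw [heatFlow]
        simp_rw [heatFlow_add_eq_integral t w, ← integral_mul_const, mul_assoc]
    _ = ∫ z, ∫ y, w (x + z) * (heatKernel t (z - y) * heatKernel s y) :=
        integral_integral_swap (hw.integrable_prod_heatKernel hp hs ht x)
    _ = _ := by
        simp_rw [integral_const_mul, integral_heatKernel_sub_mul_heatKernel hs ht]
        rfl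

end Semigroup

section TimeWeight

lemma one_add_sqrt_rpow_le {p s τ : ℝ} (hp : 0 ≤ p) (hτ : 0 < τ) (hs : τ ≤ s) :
    (1 + √s) ^ p ≤ (1 + (√τ)⁻¹) ^ p * s ^ (p / 2) := by
  have hs0 : 0 ≤ s := hτ.le.trans hs
  have hone : 1 ≤ (√τ)⁻¹ * √s := by
    rw [inv_mul_eq_div]
    exact (one_le_div (Real.sqrt_pos.2 hτ)).2 (Real.sqrt_le_sqrt hs)
  calc (1 + √s) ^ p ≤ ((1 + (√τ)⁻¹) * √s) ^ p :=
        Real.rpow_le_rpow (by positivity) (by linarith) hp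
    _ = (1 + (√τ)⁻¹) ^ p * s ^ (p / 2) := by
        rw [Real.mul_rpow (by positivity) (Real.sqrt_nonneg s), Real.sqrt_eq_rpow s,
          ← Real.rpow_mul hs0]
        ring_nf

lemma tendsto_one_add_sqrt_rpow_div_atTop {p : ℝ} (hp : 0 ≤ p) (hp2 : p < 2) :
    Tendsto (fun s : ℝ => (1 + √s) ^ p / s) atTop (𝓝 0) := by
  have hlim := (tendsto_rpow_neg_atTop (by linarith : 0 < 1 - p / 2)).const_mul ((1 + (√1)⁻¹) ^ p)
  rw [mul_zero] at hlim
  refine tendsto_of_tendsto_of_tendsto_of_le_of_le' tendsto_const_nhds hlim ?_ ?_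
  · filter_upwards [eventually_ge_atTop 0] with s hs
    positivity
  · filter_upwards [eventually_ge_atTop 1] with s hs
    have hs0 : 0 < s := by linarith
    rw [neg_sub, Real.rpow_sub_one hs0.ne', ← mul_div_assoc]
    exact div_le_div_of_nonneg_right (one_add_sqrt_rpow_le hp one_pos hs) hs0.le

variable {p σ : ℝ}

lemma integrableOn_Ioi_one_add_sqrt_rpow_mul_rpow (hp : 0 ≤ p) (hpσ : p < 2 * σ) {τ : ℝ}
    (hτ : 0 < τ) : IntegrableOn (fun t : ℝ => (1 + √t) ^ p * t ^ (-1 - σ)) (Ioi τ) := by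
  have hpow : IntegrableOn (fun t : ℝ => t ^ (p / 2 + (-1 - σ))) (Ioi τ) :=
    integrableOn_Ioi_rpow_of_lt (by linarith) hτ
  refine (hpow.const_mul ((1 + (√τ)⁻¹) ^ p)).mono' (by fun_prop)
    (ae_restrict_of_forall_mem measurableSet_Ioi fun t ht => ?_)
  have ht0 : 0 < t := hτ.trans ht
  rw [Real.norm_of_nonneg (by positivity), Real.rpow_add ht0, ← mul_assoc]
  gcongr
  exact one_add_sqrt_rpow_le hp hτ (le_of_lt ht)

lemma integrableOn_Ioi_min_one_mul_rpow (hσ : σ < 1) (hp : 0 ≤ p) (hpσ : p < 2 * σ) :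
    IntegrableOn (fun t : ℝ => min t 1 * (1 + √t) ^ p * t ^ (-1 - σ)) (Ioi 0) := by
  rw [← Ioc_union_Ioi_eq_Ioi (zero_le_one' ℝ)]
  refine IntegrableOn.union ?_ ?_
  · have hpow : IntegrableOn (fun t : ℝ => t ^ (-σ)) (Ioc 0 1) :=
      (intervalIntegrable_iff_integrableOn_Ioc_of_le zero_le_one).1
        (intervalIntegral.intervalIntegrable_rpow' (by linarith))
    refine (hpow.const_mul (2 ^ p)).mono' (by fun_prop)
      (ae_restrict_of_forall_mem measurableSet_Ioc fun t ht => ?_)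
    have ht0 : 0 < t := ht.1
    have hsqrt : √t ≤ 1 := Real.sqrt_le_one.2 ht.2
    rw [Real.norm_of_nonneg (by positivity), min_eq_left ht.2]
    calc t * (1 + √t) ^ p * t ^ (-1 - σ) = (1 + √t) ^ p * t ^ (-σ) := by
          rw [show -1 - σ = -σ - 1 by ring, Real.rpow_sub_one ht0.ne']; field_simp
      _ ≤ 2 ^ p * t ^ (-σ) := by gcongr; linarith
  · refine (integrableOn_Ioi_one_add_sqrt_rpow_mul_rpow hp hpσ one_pos).congr_fun
      (fun t ht => ?_) measurableSet_Ioi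
    simp only [min_eq_right (le_of_lt (mem_Ioi.1 ht)), one_mul]

end TimeWeight

section SecondDifference

lemma abs_exp_neg_mul_cosh_sub_one_le {a b c : ℝ} (hb : 0 ≤ b) (hb' : 8 * b ≤ 1) (hc : 0 ≤ c)
    (ha : a ^ 2 ≤ 8 * b * c) :
    |Real.exp (-b) * Real.cosh a - 1| ≤ 8 * b * Real.exp c := by
  have hexp_b : Real.exp (-b) ≤ 1 := Real.exp_le_one_iff.2 (by linarith)
  have hhalf : a ^ 2 / 2 ≤ c / 2 := by nlinarith
  have hcosh : Real.cosh a - 1 ≤ 8 * b * Real.exp c := by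
    calc Real.cosh a - 1 ≤ Real.exp (a ^ 2 / 2) - 1 := by
          linarith [Real.cosh_le_exp_half_sq a]
      _ ≤ a ^ 2 / 2 * Real.exp (a ^ 2 / 2) := by
          have h := Real.add_one_le_exp (-(a ^ 2 / 2))
          have hinv : Real.exp (-(a ^ 2 / 2)) * Real.exp (a ^ 2 / 2) = 1 := by
            rw [← Real.exp_add, neg_add_cancel, Real.exp_zero]
          nlinarith [Real.exp_pos (a ^ 2 / 2)]
      _ ≤ 8 * b * (c / 2) * Real.exp (c / 2) := by gcongr; linarith
      _ ≤ 8 * b * Real.exp (c / 2) * Real.exp (c / 2) := by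
          gcongr; linarith [Real.add_one_le_exp (c / 2)]
      _ = 8 * b * Real.exp c := by rw [mul_assoc, ← Real.exp_add, add_halves]
  have hone : b ≤ 8 * b * Real.exp c := by nlinarith [Real.one_le_exp hc]
  have hlow := Real.add_one_le_exp (-b)
  have hcosh_one := Real.one_le_cosh a
  rw [abs_le]
  constructor <;> nlinarith [Real.exp_pos (-b)]

lemma heatKernel_sub_add_heatKernel_add (s : ℝ) (y h : V) :
    heatKernel s (y - h) + heatKernel s (y + h) - 2 * heatKernel s y =
      2 * heatKernel s y *
        (Real.exp (-(‖h‖ ^ 2 / (2 * s))) * Real.cosh (⟪y, h⟫ / s) - 1) := by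
  have hsub : -‖y - h‖ ^ 2 / (2 * s) =
      -‖y‖ ^ 2 / (2 * s) + (-(‖h‖ ^ 2 / (2 * s)) + ⟪y, h⟫ / s) := by
    rw [norm_sub_sq_real]; ring
  have hadd : -‖y + h‖ ^ 2 / (2 * s) =
      -‖y‖ ^ 2 / (2 * s) + (-(‖h‖ ^ 2 / (2 * s)) + -(⟪y, h⟫ / s)) := by
    rw [norm_add_sq_real]; ring
  simp only [heatKernel, hsub, hadd, Real.exp_add, Real.cosh_eq]
  ring

lemma exp_mul_heatKernel {s : ℝ} (hs : 0 < s) (y : V) :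
    Real.exp (‖y‖ ^ 2 / (4 * s)) * heatKernel s y =
      2 ^ ((Module.finrank ℝ V : ℝ) / 2) * heatKernel (2 * s) y := by
  have hexp : -‖y‖ ^ 2 / (2 * (2 * s)) = ‖y‖ ^ 2 / (4 * s) + -‖y‖ ^ 2 / (2 * s) := by
    field_simp; ring
  have htwo : (2 : ℝ) ^ ((Module.finrank ℝ V : ℝ) / 2) *
      2 ^ (-(Module.finrank ℝ V : ℝ) / 2) = 1 := by
    rw [← Real.rpow_add two_pos, neg_div, add_neg_cancel, Real.rpow_zero]
  unfold heatKernel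
  rw [hexp, Real.exp_add, mul_left_comm (2 * Real.pi) 2 s,
    Real.mul_rpow two_pos.le (by positivity)]
  linear_combination -(Real.exp (‖y‖ ^ 2 / (4 * s)) * (2 * Real.pi * s) ^
    (-(Module.finrank ℝ V : ℝ) / 2) * Real.exp (-‖y‖ ^ 2 / (2 * s))) * htwo

lemma abs_heatKernel_sub_add_heatKernel_add_le {s : ℝ} (hs : 0 < s) {h : V}
    (hh : 4 * ‖h‖ ^ 2 ≤ s) (y : V) :
    |heatKernel s (y - h) + heatKernel s (y + h) - 2 * heatKernel s y| ≤
      8 * 2 ^ ((Module.finrank ℝ V : ℝ) / 2) * (‖h‖ ^ 2 / s) * heatKernel (2 * s) y := by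
  have hinner : (⟪y, h⟫ / s) ^ 2 ≤ 8 * (‖h‖ ^ 2 / (2 * s)) * (‖y‖ ^ 2 / (4 * s)) := by
    have hcs : ⟪y, h⟫ ^ 2 ≤ (‖y‖ * ‖h‖) ^ 2 :=
      sq_le_sq' (neg_le_of_abs_le (abs_real_inner_le_norm y h)) (real_inner_le_norm y h)
    calc (⟪y, h⟫ / s) ^ 2 ≤ (‖y‖ * ‖h‖) ^ 2 / s ^ 2 := by rw [div_pow]; gcongr
      _ = _ := by field_simp; ring
  have hsmall : 8 * (‖h‖ ^ 2 / (2 * s)) ≤ 1 := by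
    rw [← mul_div_assoc, div_le_one (by positivity)]; linarith
  have hG := heatKernel_pos hs y
  rw [heatKernel_sub_add_heatKernel_add, abs_mul, abs_of_pos (by positivity)]
  calc _ ≤ 2 * heatKernel s y * (8 * (‖h‖ ^ 2 / (2 * s)) * Real.exp (‖y‖ ^ 2 / (4 * s))) := by
        gcongr
        exact abs_exp_neg_mul_cosh_sub_one_le (by positivity) hsmall (by positivity) hinner
    _ = 8 * (‖h‖ ^ 2 / s) * (Real.exp (‖y‖ ^ 2 / (4 * s)) * heatKernel s y) := by ring
    _ = _ := by rw [exp_mul_heatKernel hs]; ring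

variable [MeasurableSpace V] [BorelSpace V] [FiniteDimensional ℝ V]
variable {p A : ℝ} {w : V → ℝ}

lemma HasGrowth.secondDiff_heatFlow_eq_integral (hp : 0 ≤ p) (hw : HasGrowth p A w) {s : ℝ}
    (hs : 0 < s) (x h : V) :
    heatFlow s w (x + h) + heatFlow s w (x - h) - 2 * heatFlow s w x =
      ∫ y, w (x + y) * (heatKernel s (y - h) + heatKernel s (y + h) - 2 * heatKernel s y) := by
  have hint : ∀ k, Integrable fun y => w (x + y) * heatKernel s (y - k) := fun k =>
    ((hw.integrable_mul_heatKernel hp hs (x + k)).comp_sub_right k).congr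
      (.of_forall fun y => by simp only [add_assoc, add_sub_cancel])
  have hplus := hint (-h)
  have hzero := hint 0
  simp only [sub_neg_eq_add, sub_zero] at hplus hzero
  simp only [mul_sub, mul_add, mul_left_comm _ (2 : ℝ)]
  rw [integral_sub (Integrable.fun_add (hint h) hplus) (hzero.const_mul 2),
    integral_add (hint h) hplus,
    integral_const_mul, sub_eq_add_neg x h, heatFlow_add_eq_integral s w x h,
    heatFlow_add_eq_integral s w x (-h)]
  simp only [sub_neg_eq_add, heatFlow]

lemma HasGrowth.abs_secondDiff_heatFlow_le_of_small (hp : 0 ≤ p) (hw : HasGrowth p A w) {s : ℝ}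
    (hs : 0 < s) (x : V) {h : V} (hh : 4 * ‖h‖ ^ 2 ≤ s) :
    |heatFlow s w (x + h) + heatFlow s w (x - h) - 2 * heatFlow s w x| ≤
      8 * 2 ^ ((Module.finrank ℝ V : ℝ) / 2) * 2 ^ p * gaussianMoment V p *
        (A * (1 + ‖x‖) ^ p) * ((1 + √s) ^ p * (‖h‖ ^ 2 / s)) := by
  have hA := hw.nonneg
  have hM := gaussianMoment_nonneg V p
  have hsqrt : (1 + √(2 * s)) ^ p ≤ 2 ^ p * (1 + √s) ^ p := by
    rw [← Real.mul_rpow (by norm_num) (by positivity)]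
    refine Real.rpow_le_rpow (by positivity) ?_ hp
    have : √(2 * s) ≤ 2 * √s := by
      rw [Real.sqrt_le_left (by positivity), mul_pow, Real.sq_sqrt hs.le]; linarith
    linarith
  rw [hw.secondDiff_heatFlow_eq_integral hp hs]
  refine (hw.abs_integral_mul_le hp (by positivity : 0 < 2 * s)
    (abs_heatKernel_sub_add_heatKernel_add_le hs hh) x).trans ?_
  calc _ ≤ A * (1 + ‖x‖) ^ p * (8 * 2 ^ ((Module.finrank ℝ V : ℝ) / 2) * (‖h‖ ^ 2 / s)) *
        (2 ^ p * (1 + √s) ^ p * gaussianMoment V p) := by gcongr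
    _ = _ := by ring

lemma HasGrowth.abs_secondDiff_heatFlow_le (hp : 0 ≤ p) (hw : HasGrowth p A w) {s : ℝ}
    (hs : 0 < s) (x h : V) :
    |heatFlow s w (x + h) + heatFlow s w (x - h) - 2 * heatFlow s w x| ≤
      4 * gaussianMoment V p * (A * (1 + ‖x‖) ^ p) * (1 + √s) ^ p * (1 + ‖h‖) ^ p := by
  have hA := hw.nonneg
  have hM := gaussianMoment_nonneg V p
  have hP := hw.hasGrowth_heatFlow hp hs
  have hplus := hP.abs_translate_le hp x h
  have hminus := hP.abs_translate_le hp x (-h)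
  have hmid := (hP.abs_le x).trans
    (le_mul_of_one_le_right (by positivity) (one_le_one_add_norm_rpow hp h))
  rw [norm_neg, ← sub_eq_add_neg] at hminus
  calc |heatFlow s w (x + h) + heatFlow s w (x - h) - 2 * heatFlow s w x|
      ≤ |heatFlow s w (x + h)| + |heatFlow s w (x - h)| + 2 * |heatFlow s w x| := by
        refine (abs_sub _ _).trans (add_le_add (abs_add_le _ _) ?_)
        rw [abs_mul, abs_two]
    _ ≤ _ := by linarith

variable (V)

lemma exists_secondDiff_heatFlow_bound (hp : 0 ≤ p) :
    ∃ C, 0 ≤ C ∧ ∀ {A : ℝ} {w : V → ℝ}, HasGrowth p A w → ∀ {s : ℝ}, 0 < s → ∀ x h,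
      |heatFlow s w (x + h) + heatFlow s w (x - h) - 2 * heatFlow s w x| ≤
        C * (A * (1 + ‖x‖) ^ p) * ((1 + √s) ^ p / s) * (‖h‖ ^ 2 * (1 + ‖h‖) ^ p) := by
  have hM := gaussianMoment_nonneg V p
  set C₁ := 8 * 2 ^ ((Module.finrank ℝ V : ℝ) / 2) * 2 ^ p * gaussianMoment V p
  have hC₁ : 0 ≤ C₁ := by positivity
  refine ⟨C₁ + 16 * gaussianMoment V p, by positivity, fun {A w} hw {s} hs x h => ?_⟩
  have hA := hw.nonneg
  rcases le_or_gt (4 * ‖h‖ ^ 2) s with hsmall | hlarge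
  · refine (hw.abs_secondDiff_heatFlow_le_of_small hp hs x hsmall).trans ?_
    calc C₁ * (A * (1 + ‖x‖) ^ p) * ((1 + √s) ^ p * (‖h‖ ^ 2 / s))
        = C₁ * (A * (1 + ‖x‖) ^ p) * ((1 + √s) ^ p / s) * (‖h‖ ^ 2 * 1) := by ring
      _ ≤ _ := by
        gcongr
        exacts [le_add_of_nonneg_right (by positivity), one_le_one_add_norm_rpow hp h]
  · refine (hw.abs_secondDiff_heatFlow_le hp hs x h).trans ?_
    have hratio : 1 ≤ 4 * ‖h‖ ^ 2 / s := (one_le_div hs).2 hlarge.le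
    calc 4 * gaussianMoment V p * (A * (1 + ‖x‖) ^ p) * (1 + √s) ^ p * (1 + ‖h‖) ^ p
        ≤ 4 * gaussianMoment V p * (A * (1 + ‖x‖) ^ p) * (1 + √s) ^ p * (1 + ‖h‖) ^ p *
          (4 * ‖h‖ ^ 2 / s) := le_mul_of_one_le_right (by positivity) hratio
      _ = 16 * gaussianMoment V p * (A * (1 + ‖x‖) ^ p) * ((1 + √s) ^ p / s) *
          (‖h‖ ^ 2 * (1 + ‖h‖) ^ p) := by ring
      _ ≤ _ := by gcongr; exact le_add_of_nonneg_left hC₁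

end SecondDifference

section TimeRegularity

variable [MeasurableSpace V] [BorelSpace V] [FiniteDimensional ℝ V]
variable {p A : ℝ}

-- The Gaussian is even, so only the symmetrization of `f` matters.
lemma integral_mul_heatKernel_le_of_add_neg_le {q K t : ℝ} (hq : 0 ≤ q) (hK : 0 ≤ K) (ht : 0 < t)
    {f : V → ℝ} (hf : Integrable fun z => f z * heatKernel t z)
    (hsymm : ∀ z, f z + f (-z) ≤ 2 * K * (‖z‖ ^ 2 * (1 + ‖z‖) ^ q)) :
    ∫ z, f z * heatKernel t z ≤ K * (t * (1 + √t) ^ q * gaussianMoment V (q + 2)) := by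
  have hfneg : Integrable fun z => f (-z) * heatKernel t z := by
    simpa only [heatKernel_neg] using hf.comp_neg
  have heven : ∫ z, f (-z) * heatKernel t z = ∫ z, f z * heatKernel t z := by
    simpa only [heatKernel_neg] using
      integral_neg_eq_self (fun z => f z * heatKernel t z) volume
  have hmoment := integral_norm_pow_mul_heatKernel_le (V := V) hq 2 ht
  rw [Real.sq_sqrt ht.le, Nat.cast_ofNat] at hmoment
  have htwice : 2 * ∫ z, f z * heatKernel t z ≤
      2 * K * ∫ z : V, ‖z‖ ^ 2 * (1 + ‖z‖) ^ q * heatKernel t z := by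
    calc 2 * ∫ z, f z * heatKernel t z
        = ∫ z, (f z * heatKernel t z + f (-z) * heatKernel t z) := by
          rw [integral_add hf hfneg, heven, two_mul]
      _ ≤ ∫ z : V, 2 * K * (‖z‖ ^ 2 * (1 + ‖z‖) ^ q * heatKernel t z) := by
          refine integral_mono (hf.add hfneg)
            ((integrable_norm_pow_mul_heatKernel hq 2 ht).const_mul _) fun z => ?_
          rw [← add_mul, ← mul_assoc (2 * K)]
          exact mul_le_mul_of_nonneg_right (hsymm z) (heatKernel_pos ht z).le
      _ = _ := integral_const_mul _ _
  nlinarith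

variable (V)

lemma exists_heatFlow_add_sub_bound (hp : 0 ≤ p) :
    ∃ C, 0 ≤ C ∧ ∀ {A : ℝ} {w : V → ℝ}, HasGrowth p A w → ∀ {s t : ℝ}, 0 < s → 0 < t → ∀ x,
      |heatFlow (s + t) w x - heatFlow s w x| ≤
        C * (A * (1 + ‖x‖) ^ p) * ((1 + √s) ^ p / s) * (t * (1 + √t) ^ p) := by
  obtain ⟨C, hC, hbound⟩ := exists_secondDiff_heatFlow_bound V hp
  have hM := gaussianMoment_nonneg V (p + 2)
  have upper : ∀ {A : ℝ} {w : V → ℝ}, HasGrowth p A w → ∀ {s t : ℝ}, 0 < s → 0 < t → ∀ x,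
      heatFlow (s + t) w x - heatFlow s w x ≤ C * gaussianMoment V (p + 2) *
        (A * (1 + ‖x‖) ^ p) * ((1 + √s) ^ p / s) * (t * (1 + √t) ^ p) := by
    intro A w hw s t hs ht x
    have hA := hw.nonneg
    have hP := hw.hasGrowth_heatFlow hp hs
    rw [add_comm s, ← hw.heatFlow_heatFlow hp ht hs, ← hP.heatFlow_increment hp ht]
    simp only [heatFlow_apply_zero]
    refine (integral_mul_heatKernel_le_of_add_neg_le hp
      (K := C * (A * (1 + ‖x‖) ^ p) * ((1 + √s) ^ p / s)) (by positivity) ht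
      (by simpa only [zero_add] using (hP.increment hp x).integrable_mul_heatKernel hp ht 0)
      fun z => ?_).trans_eq (by ring)
    have hz := (le_abs_self _).trans (hbound hw hs x z)
    have hrhs : 0 ≤ C * (A * (1 + ‖x‖) ^ p) * ((1 + √s) ^ p / s) * (‖z‖ ^ 2 * (1 + ‖z‖) ^ p) := by
      positivity
    rw [← sub_eq_add_neg]
    linarith
  refine ⟨C * gaussianMoment V (p + 2), by positivity, fun {A w} hw {s t} hs ht x => ?_⟩
  refine abs_le'.2 ⟨upper hw hs ht x, ?_⟩
  have := upper hw.neg hs ht x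
  rw [heatFlow_neg, heatFlow_neg] at this
  linarith

end TimeRegularity

section Subordination

lemma integrableOn_rpow_mul_exp_neg_div {a c : ℝ} (ha : 0 < a) (hc : 0 < c) :
    IntegrableOn (fun t : ℝ => t ^ (-a - 1) * Real.exp (-(c / t))) (Ioi 0) := by
  have hgamma : IntegrableOn (fun y : ℝ => y ^ (a - 1) * Real.exp (-c * y ^ (1 : ℝ))) (Ioi 0) :=
    integrableOn_rpow_mul_exp_neg_mul_rpow (by linarith) one_pos hc
  refine ((integrableOn_Ioi_comp_rpow_iff' _ (p := -1) (by norm_num)).2 hgamma).congr_fun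
    (fun t ht => ?_) measurableSet_Ioi
  have ht0 : (0 : ℝ) < t := ht
  simp only [Real.rpow_one, smul_eq_mul]
  rw [← mul_assoc, ← Real.rpow_mul ht0.le, ← Real.rpow_add ht0, Real.rpow_neg_one, div_eq_mul_inv]
  ring_nf

lemma integral_rpow_mul_exp_neg_div {a c : ℝ} (ha : 0 < a) (hc : 0 < c) :
    ∫ t in Ioi (0 : ℝ), t ^ (-a - 1) * Real.exp (-(c / t)) = (1 / c) ^ a * Real.Gamma a := by
  rw [← Real.integral_rpow_mul_exp_neg_mul_Ioi ha hc,
    ← integral_comp_rpow_Ioi _ (by norm_num : (-1 : ℝ) ≠ 0)]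
  refine setIntegral_congr_fun measurableSet_Ioi fun t ht => ?_
  have ht0 : (0 : ℝ) < t := ht
  simp only [abs_neg, abs_one, one_mul, smul_eq_mul]
  rw [← mul_assoc, ← Real.rpow_mul ht0.le, ← Real.rpow_add ht0, Real.rpow_neg_one, div_eq_mul_inv,
    inv_inv]
  ring_nf

variable (V) in
/-- The constant `κ` in Bochner's subordination formula
`∫₀^∞ heatKernel t z t^{-1-σ} dt = κ / ‖z‖^{d + 2σ}`, where `d` is the dimension of `V`. -/
noncomputable def subordinationConst (σ : ℝ) : ℝ :=
  (2 * Real.pi) ^ (-(Module.finrank ℝ V : ℝ) / 2) * 2 ^ ((Module.finrank ℝ V : ℝ) / 2 + σ) *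
    Real.Gamma ((Module.finrank ℝ V : ℝ) / 2 + σ)

variable {σ : ℝ}

variable (V) in
lemma subordinationConst_pos (hσ : 0 < σ) : 0 < subordinationConst V σ := by
  have := Real.Gamma_pos_of_pos (by positivity : 0 < (Module.finrank ℝ V : ℝ) / 2 + σ)
  unfold subordinationConst
  positivity

lemma heatKernel_mul_rpow {t : ℝ} (ht : 0 < t) (z : V) (σ : ℝ) :
    heatKernel t z * t ^ (-1 - σ) = (2 * Real.pi) ^ (-(Module.finrank ℝ V : ℝ) / 2) *
      (t ^ (-((Module.finrank ℝ V : ℝ) / 2 + σ) - 1) * Real.exp (-(‖z‖ ^ 2 / 2 / t))) := by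
  have hpow : t ^ (-((Module.finrank ℝ V : ℝ) / 2 + σ) - 1) =
      t ^ (-(Module.finrank ℝ V : ℝ) / 2) * t ^ (-1 - σ) := by
    rw [← Real.rpow_add ht]; ring_nf
  rw [heatKernel, Real.mul_rpow (by positivity) ht.le, hpow, div_div, ← neg_div]
  ring

lemma integrableOn_heatKernel_mul_rpow (hσ : 0 < σ) {z : V} (hz : z ≠ 0) :
    IntegrableOn (fun t => heatKernel t z * t ^ (-1 - σ)) (Ioi 0) :=
  IntegrableOn.congr_fun ((integrableOn_rpow_mul_exp_neg_div (by positivity)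
    (by have := norm_pos_iff.2 hz; positivity)).const_mul _)
    (fun _ ht => (heatKernel_mul_rpow ht z σ).symm) measurableSet_Ioi

lemma integral_heatKernel_mul_rpow (hσ : 0 < σ) {z : V} (hz : z ≠ 0) :
    ∫ t in Ioi (0 : ℝ), heatKernel t z * t ^ (-1 - σ) =
      subordinationConst V σ / ‖z‖ ^ ((Module.finrank ℝ V : ℝ) + 2 * σ) := by
  have hz0 := norm_pos_iff.2 hz
  have hpow : (‖z‖ ^ 2) ^ ((Module.finrank ℝ V : ℝ) / 2 + σ) =
      ‖z‖ ^ ((Module.finrank ℝ V : ℝ) + 2 * σ) := by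
    rw [← Real.rpow_natCast, ← Real.rpow_mul hz0.le]; push_cast; ring_nf
  rw [setIntegral_congr_fun measurableSet_Ioi fun t ht => heatKernel_mul_rpow ht z σ,
    integral_const_mul, integral_rpow_mul_exp_neg_div (by positivity) (by positivity), one_div_div,
    Real.div_rpow two_pos.le (by positivity), hpow, subordinationConst]
  ring

variable [MeasurableSpace V] [BorelSpace V] [FiniteDimensional ℝ V]
variable {p A : ℝ} {D : V → ℝ}

lemma HasGrowth.integrable_div_norm_rpow (hp : 0 ≤ p) (hpσ : p < 2 * σ) (hD : HasGrowth p A D)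
    {δ : ℝ} (hδ : 0 < δ) (hzero : ∀ z, ‖z‖ < δ → D z = 0) :
    Integrable (fun z => D z / ‖z‖ ^ ((Module.finrank ℝ V : ℝ) + 2 * σ)) := by
  set N := (Module.finrank ℝ V : ℝ) + 2 * σ with hN
  have hN0 : 0 < N := by rw [hN]; linarith [(Module.finrank ℝ V).cast_nonneg (α := ℝ)]
  have hA := hD.nonneg
  refine ((integrable_one_add_norm (E := V) (r := N - p)
    (by rw [hN]; linarith)).const_mul
    (A * (1 + 1 / δ) ^ N)).mono'
    (hD.measurable.div (by fun_prop)).aestronglyMeasurable (.of_forall fun z => ?_)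
  rcases lt_or_ge ‖z‖ δ with h | h
  · rw [hzero z h, zero_div, norm_zero]; positivity
  · have hz : 0 < ‖z‖ := hδ.trans_le h
    have hcompare : (1 + ‖z‖) ^ N ≤ (1 + 1 / δ) ^ N * ‖z‖ ^ N := by
      rw [← Real.mul_rpow (by positivity) (by positivity)]
      refine Real.rpow_le_rpow (by positivity) ?_ hN0.le
      have : 1 ≤ 1 / δ * ‖z‖ := by rw [one_div_mul_eq_div]; exact (one_le_div hδ).2 h
      linarith
    rw [norm_div, Real.norm_of_nonneg (by positivity : 0 ≤ ‖z‖ ^ N), div_le_iff₀ (by positivity),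
      neg_sub, Real.rpow_sub (by positivity)]
    calc |D z| ≤ A * (1 + ‖z‖) ^ p := hD.abs_le z
      _ = A * ((1 + ‖z‖) ^ p / (1 + ‖z‖) ^ N) * (1 + ‖z‖) ^ N := by field_simp
      _ ≤ A * ((1 + ‖z‖) ^ p / (1 + ‖z‖) ^ N) * ((1 + 1 / δ) ^ N * ‖z‖ ^ N) := by gcongr
      _ = _ := by ring

lemma integrable_prod_mul_heatKernel_mul_rpow (hσ : 0 < σ) (hDm : Measurable D) (hD0 : D 0 = 0)
    (hD : Integrable (fun z => D z / ‖z‖ ^ ((Module.finrank ℝ V : ℝ) + 2 * σ))) :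
    Integrable (Function.uncurry fun z t => D z * (heatKernel t z * t ^ (-1 - σ)))
      (volume.prod (volume.restrict (Ioi 0))) := by
  have hm : Measurable (Function.uncurry fun (z : V) (t : ℝ) =>
      D z * (heatKernel t z * t ^ (-1 - σ))) := by
    have hK : Measurable (fun a : V × ℝ => heatKernel a.2 a.1) :=
      measurable_uncurry_heatKernel.comp measurable_swap
    unfold Function.uncurry
    fun_prop
  refine (integrable_prod_iff hm.aestronglyMeasurable).2 ⟨.of_forall fun z => ?_, ?_⟩
  · rcases eq_or_ne z 0 with rfl | hz
    · simp only [Function.uncurry, hD0, zero_mul]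
      exact integrable_zero _ _ _
    · exact (integrableOn_heatKernel_mul_rpow hσ hz).const_mul (D z)
  · refine (hD.norm.const_mul (subordinationConst V σ)).congr (.of_forall fun z => ?_)
    rcases eq_or_ne z 0 with rfl | hz
    · simp only [Function.uncurry, hD0, zero_mul, zero_div, norm_zero, mul_zero, integral_zero]
    · have hnorm : ∀ t ∈ Ioi (0 : ℝ), ‖D z * (heatKernel t z * t ^ (-1 - σ))‖ =
          ‖D z‖ * (heatKernel t z * t ^ (-1 - σ)) := fun t ht => by
        have ht0 : (0 : ℝ) < t := ht
        have hG := heatKernel_pos ht0 z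
        rw [norm_mul, Real.norm_of_nonneg (by positivity : 0 ≤ heatKernel t z * t ^ (-1 - σ))]
      simp only [Function.uncurry]
      rw [setIntegral_congr_fun measurableSet_Ioi hnorm, integral_const_mul,
        integral_heatKernel_mul_rpow hσ hz, norm_div, Real.norm_of_nonneg (by positivity :
          0 ≤ ‖z‖ ^ ((Module.finrank ℝ V : ℝ) + 2 * σ))]
      ring

lemma integral_mul_heatKernel_mul_rpow (D : V → ℝ) (t : ℝ) :
    ∫ z, D z * (heatKernel t z * t ^ (-1 - σ)) = heatFlow t D 0 * t ^ (-1 - σ) := by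
  simp_rw [heatFlow_apply_zero, ← mul_assoc, integral_mul_const]

lemma integrableOn_heatFlow_mul_rpow (hσ : 0 < σ) (hDm : Measurable D) (hD0 : D 0 = 0)
    (hD : Integrable (fun z => D z / ‖z‖ ^ ((Module.finrank ℝ V : ℝ) + 2 * σ))) :
    IntegrableOn (fun t => heatFlow t D 0 * t ^ (-1 - σ)) (Ioi 0) :=
  (integrable_prod_mul_heatKernel_mul_rpow hσ hDm hD0 hD).integral_prod_right.congr
    (.of_forall (integral_mul_heatKernel_mul_rpow D))

lemma subordination (hσ : 0 < σ) (hDm : Measurable D) (hD0 : D 0 = 0)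
    (hD : Integrable (fun z => D z / ‖z‖ ^ ((Module.finrank ℝ V : ℝ) + 2 * σ))) :
    subordinationConst V σ * ∫ z, D z / ‖z‖ ^ ((Module.finrank ℝ V : ℝ) + 2 * σ) =
      ∫ t in Ioi (0 : ℝ), heatFlow t D 0 * t ^ (-1 - σ) := by
  calc _ = ∫ z, ∫ t in Ioi (0 : ℝ), D z * (heatKernel t z * t ^ (-1 - σ)) := by
        rw [← integral_const_mul]
        refine integral_congr_ae (.of_forall fun z => ?_)
        simp only [integral_const_mul]
        rcases eq_or_ne z 0 with rfl | hz
        · simp only [hD0, zero_div, zero_mul, mul_zero]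
        · rw [integral_heatKernel_mul_rpow hσ hz]; ring
    _ = _ := by
        rw [integral_integral_swap (integrable_prod_mul_heatKernel_mul_rpow hσ hDm hD0 hD)]
        simp_rw [integral_mul_heatKernel_mul_rpow]

end Subordination

section PrincipalValue

variable [MeasurableSpace V] [BorelSpace V] [FiniteDimensional ℝ V]
variable {σ p A K τ : ℝ} {D : V → ℝ}

lemma HasGrowth.abs_heatFlow_apply_zero_le (hp : 0 ≤ p) (hD : HasGrowth p A D) {t : ℝ}
    (ht : 0 < t) : |heatFlow t D 0| ≤ A * gaussianMoment V p * (1 + √t) ^ p := by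
  refine (hD.abs_heatFlow_le hp ht 0).trans_eq ?_
  rw [norm_zero, add_zero, Real.one_rpow]
  ring

lemma setIntegral_Ioc_heatFlow_mul_rpow_le (hσ : σ < 1) (hK : 0 ≤ K) (hτ : 0 < τ) (hp : 0 ≤ p)
    (hD : HasGrowth p A D) (hsymm : ∀ z, D z + D (-z) ≤ 2 * K * ‖z‖ ^ 2)
    (hint : IntegrableOn (fun t => heatFlow t D 0 * t ^ (-1 - σ)) (Ioi 0)) :
    ∫ t in Ioc 0 τ, heatFlow t D 0 * t ^ (-1 - σ) ≤
      K * gaussianMoment V 2 * (τ ^ (1 - σ) / (1 - σ)) := by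
  have hpow : IntegrableOn (fun t : ℝ => t ^ (-σ)) (Ioc 0 τ) :=
    (intervalIntegrable_iff_integrableOn_Ioc_of_le hτ.le).1
      (intervalIntegral.intervalIntegrable_rpow' (by linarith))
  have hvalue : ∫ t in Ioc 0 τ, t ^ (-σ) = τ ^ (1 - σ) / (1 - σ) := by
    rw [← intervalIntegral.integral_of_le hτ.le, integral_rpow (Or.inl (by linarith)),
      Real.zero_rpow (by linarith), sub_zero, neg_add_eq_sub]
  rw [← hvalue, ← integral_const_mul]
  refine setIntegral_mono_on (hint.mono_set Ioc_subset_Ioi_self) (hpow.const_mul _)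
    measurableSet_Ioc fun t ht => ?_
  have ht0 : 0 < t := ht.1
  have hflow : heatFlow t D 0 ≤ K * (t * gaussianMoment V 2) := by
    have hprod : Integrable fun z => D z * heatKernel t z := by
      simpa only [zero_add] using hD.integrable_mul_heatKernel hp ht0 0
    have h := integral_mul_heatKernel_le_of_add_neg_le le_rfl hK ht0 hprod
      (by simpa only [Real.rpow_zero, mul_one] using hsymm)
    simpa only [heatFlow_apply_zero, Real.rpow_zero, mul_one, zero_add] using h
  calc heatFlow t D 0 * t ^ (-1 - σ) ≤ K * (t * gaussianMoment V 2) * t ^ (-1 - σ) := by gcongr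
    _ = K * gaussianMoment V 2 * t ^ (-σ) := by
      rw [show -1 - σ = -σ - 1 by ring, Real.rpow_sub_one ht0.ne']; field_simp

lemma HasGrowth.subordination_truncated_le (hσ : σ ∈ Ioo 0 1) (hp : 0 ≤ p) (hpσ : p < 2 * σ)
    (hD : HasGrowth p A D) (hK : 0 ≤ K) (hτ : 0 < τ)
    (hsymm : ∀ z, D z + D (-z) ≤ 2 * K * ‖z‖ ^ 2) {δ : ℝ} (hδ : 0 < δ) :
    subordinationConst V σ *
        ∫ z, (ball 0 δ)ᶜ.indicator D z / ‖z‖ ^ ((Module.finrank ℝ V : ℝ) + 2 * σ) ≤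
      K * gaussianMoment V 2 * (τ ^ (1 - σ) / (1 - σ)) +
        ∫ t in Ioi τ, heatFlow t ((ball 0 δ)ᶜ.indicator D) 0 * t ^ (-1 - σ) := by
  set Dδ := (ball (0 : V) δ)ᶜ.indicator D
  have hgrowth : HasGrowth p A Dδ := hD.indicator measurableSet_ball.compl
  have hzero : ∀ z, ‖z‖ < δ → Dδ z = 0 := fun z hz =>
    indicator_of_notMem (by simpa only [mem_compl_iff, not_not, mem_ball_zero_iff] using hz) D
  have hweighted := hgrowth.integrable_div_norm_rpow hp hpσ hδ hzero
  have hDδ0 : Dδ 0 = 0 := hzero 0 (by rwa [norm_zero])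
  have hint := integrableOn_heatFlow_mul_rpow hσ.1 hgrowth.measurable hDδ0 hweighted
  have hsymmδ : ∀ z, Dδ z + Dδ (-z) ≤ 2 * K * ‖z‖ ^ 2 := fun z => by
    rcases lt_or_ge ‖z‖ δ with h | h
    · rw [hzero z h, hzero (-z) (by rwa [norm_neg]), add_zero]; positivity
    · have hmem : ∀ y : V, ‖y‖ = ‖z‖ → Dδ y = D y := fun y hy => indicator_of_mem
        (by simpa only [mem_compl_iff, mem_ball_zero_iff, not_lt, hy] using h) D
      rw [hmem z rfl, hmem (-z) (norm_neg z)]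
      exact hsymm z
  rw [subordination hσ.1 hgrowth.measurable hDδ0 hweighted, ← Ioc_union_Ioi_eq_Ioi hτ.le,
    setIntegral_union Ioc_disjoint_Ioi_same measurableSet_Ioi
      (hint.mono_set Ioc_subset_Ioi_self) (hint.mono_set (Ioi_subset_Ioi hτ.le))]
  gcongr
  exact setIntegral_Ioc_heatFlow_mul_rpow_le hσ.2 hK hτ hp hgrowth hsymmδ hint

lemma HasGrowth.integrableOn_Ioi_heatFlow_mul_rpow (hp : 0 ≤ p) (hpσ : p < 2 * σ)
    (hD : HasGrowth p A D) (hτ : 0 < τ) :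
    IntegrableOn (fun t => heatFlow t D 0 * t ^ (-1 - σ)) (Ioi τ) := by
  have hm : Measurable fun t => heatFlow t D 0 :=
    (measurable_uncurry_heatFlow hD.measurable).comp measurable_prodMk_right
  refine ((integrableOn_Ioi_one_add_sqrt_rpow_mul_rpow hp hpσ hτ).const_mul
    (A * gaussianMoment V p)).mono' (by fun_prop)
    (ae_restrict_of_forall_mem measurableSet_Ioi fun t ht => ?_)
  have ht0 : 0 < t := hτ.trans ht
  rw [norm_mul, Real.norm_of_nonneg (by positivity : 0 ≤ t ^ (-1 - σ)), ← mul_assoc]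
  gcongr
  exact hD.abs_heatFlow_apply_zero_le hp ht0

lemma HasGrowth.tendsto_setIntegral_heatFlow_truncated (hp : 0 ≤ p) (hpσ : p < 2 * σ)
    (hD : HasGrowth p A D) (hD0 : D 0 = 0) (hτ : 0 < τ) :
    Tendsto (fun δ => ∫ t in Ioi τ, heatFlow t ((ball 0 δ)ᶜ.indicator D) 0 * t ^ (-1 - σ))
      (𝓝[>] 0) (𝓝 (∫ t in Ioi τ, heatFlow t D 0 * t ^ (-1 - σ))) := by
  have hgrowth (δ : ℝ) : HasGrowth p A ((ball (0 : V) δ)ᶜ.indicator D) :=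
    hD.indicator measurableSet_ball.compl
  have hlim (z : V) : Tendsto (fun δ => (ball (0 : V) δ)ᶜ.indicator D z) (𝓝[>] 0) (𝓝 (D z)) := by
    rcases eq_or_ne z 0 with rfl | hz
    · rw [hD0]
      exact tendsto_const_nhds.congr fun δ => (indicator_apply_eq_zero.2 fun _ => hD0).symm
    · refine tendsto_const_nhds.congr' ?_
      filter_upwards [nhdsWithin_le_nhds (Iio_mem_nhds (norm_pos_iff.2 hz))] with δ hδ
      refine (indicator_of_mem ?_ D).symm
      simpa only [mem_compl_iff, mem_ball_zero_iff, not_lt] using le_of_lt (mem_Iio.1 hδ)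
  refine tendsto_integral_filter_of_dominated_convergence
    (fun t => A * gaussianMoment V p * ((1 + √t) ^ p * t ^ (-1 - σ)))
    (.of_forall fun δ =>
      ((hgrowth δ).integrableOn_Ioi_heatFlow_mul_rpow hp hpσ hτ).aestronglyMeasurable)
    (.of_forall fun δ => ae_restrict_of_forall_mem measurableSet_Ioi fun t ht => ?_)
    ((integrableOn_Ioi_one_add_sqrt_rpow_mul_rpow hp hpσ hτ).const_mul _)
    (ae_restrict_of_forall_mem measurableSet_Ioi fun t ht => ?_)
  all_goals have ht0 : 0 < t := hτ.trans ht
  · rw [norm_mul, Real.norm_of_nonneg (by positivity : 0 ≤ t ^ (-1 - σ)), ← mul_assoc]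
    gcongr
    exact (hgrowth δ).abs_heatFlow_apply_zero_le hp ht0
  · exact (tendsto_heatFlow_of_hasGrowth hp (.of_forall hgrowth) hlim ht0 0).mul_const _

lemma HasGrowth.subordination_principalValue_le (hσ : σ ∈ Ioo 0 1) (hp : 0 ≤ p)
    (hpσ : p < 2 * σ) (hD : HasGrowth p A D) (hD0 : D 0 = 0) (hK : 0 ≤ K) (hτ : 0 < τ)
    (hsymm : ∀ z, D z + D (-z) ≤ 2 * K * ‖z‖ ^ 2) {L : ℝ}
    (hL : Tendsto (fun δ => ∫ z, (ball 0 δ)ᶜ.indicator D z /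
      ‖z‖ ^ ((Module.finrank ℝ V : ℝ) + 2 * σ)) (𝓝[>] 0) (𝓝 L)) :
    subordinationConst V σ * L ≤ K * gaussianMoment V 2 * (τ ^ (1 - σ) / (1 - σ)) +
      ∫ t in Ioi τ, heatFlow t D 0 * t ^ (-1 - σ) := by
  refine le_of_tendsto_of_tendsto (hL.const_mul _)
    ((hD.tendsto_setIntegral_heatFlow_truncated hp hpσ hD0 hτ).const_add _) ?_
  filter_upwards [self_mem_nhdsWithin] with δ hδ
  exact hD.subordination_truncated_le hσ hp hpσ hK hτ hsymm hδ

end PrincipalValue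

/-- The quadratic sup-convolution `x ↦ sup_y (u y - ‖x - y‖² / ε)`, a regularisation of `u` from
above that is touched from below by paraboloids. It is used for `u` of subquadratic growth and
small `ε > 0`, so that the supremum is finite. -/
noncomputable def supConv {E : Type*} [NormedAddCommGroup E] (ε : ℝ) (u : E → ℝ) (x : E) : ℝ :=
  ⨆ y, (u y - ‖x - y‖ ^ 2 / ε)

section SupConvolution

variable {E : Type*} [NormedAddCommGroup E]

lemma one_add_norm_rpow_le_add_sq {p : ℝ} (hp : 0 ≤ p) (hp2 : p ≤ 2) (x y : E) :
    (1 + ‖y‖) ^ p ≤ 4 * ((1 + ‖x‖) ^ p + ‖x - y‖ ^ 2) := by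
  have hy : ‖y‖ ≤ ‖x‖ + ‖x - y‖ := by
    rw [← norm_neg (x - y), neg_sub]; exact norm_le_norm_add_norm_sub' y x
  have hx := norm_nonneg x
  have hxy := norm_nonneg (x - y)
  have hfour : (2 : ℝ) ^ p ≤ 4 := by
    calc (2 : ℝ) ^ p ≤ 2 ^ (2 : ℝ) := Real.rpow_le_rpow_of_exponent_le one_le_two hp2
      _ = 4 := by norm_num
  have hdouble {r : ℝ} (hr : 0 ≤ r) (h : 1 + ‖y‖ ≤ 2 * r) : (1 + ‖y‖) ^ p ≤ 4 * r ^ p := by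
    calc (1 + ‖y‖) ^ p ≤ (2 * r) ^ p := Real.rpow_le_rpow (by positivity) h hp
      _ = 2 ^ p * r ^ p := Real.mul_rpow two_pos.le hr
      _ ≤ 4 * r ^ p := by gcongr
  rcases le_total ‖x - y‖ (1 + ‖x‖) with h | h
  · nlinarith [hdouble (by linarith) (by linarith : 1 + ‖y‖ ≤ 2 * (1 + ‖x‖))]
  · have hsq : ‖x - y‖ ^ p ≤ ‖x - y‖ ^ 2 := by
      rw [← Real.rpow_two]; exact Real.rpow_le_rpow_of_exponent_le (by linarith) hp2
    have hpos : 0 ≤ (1 + ‖x‖) ^ p := by positivity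
    linarith [hdouble hxy (by linarith : 1 + ‖y‖ ≤ 2 * ‖x - y‖)]

variable [MeasurableSpace E] {p A ε : ℝ} {u : E → ℝ}

lemma HasGrowth.sub_sq_div_le (hp : 0 ≤ p) (hp2 : p ≤ 2) (hu : HasGrowth p A u) (hε : 0 < ε)
    (hAε : 8 * A * ε ≤ 1) (x y : E) :
    u y - ‖x - y‖ ^ 2 / ε ≤ 4 * A * (1 + ‖x‖) ^ p - ‖x - y‖ ^ 2 / (2 * ε) := by
  have hbound : u y ≤ A * (4 * ((1 + ‖x‖) ^ p + ‖x - y‖ ^ 2)) :=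
    ((le_abs_self _).trans (hu.abs_le y)).trans
      (mul_le_mul_of_nonneg_left (one_add_norm_rpow_le_add_sq hp hp2 x y) hu.nonneg)
  have habsorb : 4 * A * ‖x - y‖ ^ 2 ≤ ‖x - y‖ ^ 2 / (2 * ε) := by
    rw [le_div_iff₀ (by positivity)]
    nlinarith [sq_nonneg ‖x - y‖]
  have hsplit : ‖x - y‖ ^ 2 / ε = ‖x - y‖ ^ 2 / (2 * ε) + ‖x - y‖ ^ 2 / (2 * ε) := by
    field_simp; ring
  linarith

lemma HasGrowth.bddAbove_supConv (hp : 0 ≤ p) (hp2 : p ≤ 2) (hu : HasGrowth p A u) (hε : 0 < ε)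
    (hAε : 8 * A * ε ≤ 1) (x : E) : BddAbove (range fun y => u y - ‖x - y‖ ^ 2 / ε) := by
  refine ⟨4 * A * (1 + ‖x‖) ^ p, forall_mem_range.2 fun y => ?_⟩
  have hsq : 0 ≤ ‖x - y‖ ^ 2 / (2 * ε) := by positivity
  linarith [hu.sub_sq_div_le hp hp2 hε hAε x y]

lemma HasGrowth.sub_sq_div_le_supConv (hp : 0 ≤ p) (hp2 : p ≤ 2) (hu : HasGrowth p A u)
    (hε : 0 < ε) (hAε : 8 * A * ε ≤ 1) (x y : E) : u y - ‖x - y‖ ^ 2 / ε ≤ supConv ε u x :=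
  le_ciSup (hu.bddAbove_supConv hp hp2 hε hAε x) y

lemma HasGrowth.le_supConv (hp : 0 ≤ p) (hp2 : p ≤ 2) (hu : HasGrowth p A u) (hε : 0 < ε)
    (hAε : 8 * A * ε ≤ 1) (x : E) : u x ≤ supConv ε u x := by
  simpa only [sub_self, norm_zero, zero_pow two_ne_zero, zero_div, sub_zero]
    using hu.sub_sq_div_le_supConv hp hp2 hε hAε x x

lemma HasGrowth.hasGrowth_supConv [BorelSpace E] (hp : 0 ≤ p) (hp2 : p ≤ 2)
    (hu : HasGrowth p A u) (hε : 0 < ε) (hAε : 8 * A * ε ≤ 1) :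
    HasGrowth p (4 * A) (supConv ε u) := by
  refine ⟨(lowerSemicontinuous_ciSup (hu.bddAbove_supConv hp hp2 hε hAε) fun y =>
    Continuous.lowerSemicontinuous (by fun_prop)).measurable, fun x => abs_le'.2 ⟨?_, ?_⟩⟩
  · refine ciSup_le fun y => ?_
    have hsq : 0 ≤ ‖x - y‖ ^ 2 / (2 * ε) := by positivity
    linarith [hu.sub_sq_div_le hp hp2 hε hAε x y]
  · have hgrowth : 0 ≤ A * (1 + ‖x‖) ^ p := (abs_nonneg _).trans (hu.abs_le x)
    linarith [neg_le_of_abs_le (hu.abs_le x), hu.le_supConv hp hp2 hε hAε x]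

lemma HasGrowth.exists_supConv_eq [ProperSpace E] (hp : 0 ≤ p) (hp2 : p ≤ 2)
    (hu : HasGrowth p A u) (hcont : Continuous u) (hε : 0 < ε) (hAε : 8 * A * ε ≤ 1) (x : E) :
    ∃ y, supConv ε u x = u y - ‖x - y‖ ^ 2 / ε := by
  have hproper : Tendsto (fun y => ‖x - y‖ ^ 2 / (2 * ε)) (cocompact E) atTop := by
    refine ((tendsto_pow_atTop two_ne_zero).comp ?_).atTop_div_const (by positivity)
    simpa only [dist_comm _ x, dist_eq_norm] using tendsto_dist_right_cocompact_atTop x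
  obtain ⟨y, hy⟩ := Continuous.exists_forall_ge' (f := fun y => u y - ‖x - y‖ ^ 2 / ε)
    (by fun_prop) x (by
      filter_upwards [hproper.eventually_ge_atTop (4 * A * (1 + ‖x‖) ^ p - u x)] with y hy
      simp only [sub_self, norm_zero, zero_pow two_ne_zero, zero_div, sub_zero]
      linarith [hu.sub_sq_div_le hp hp2 hε hAε x y])
  exact ⟨y, (ciSup_le hy).antisymm (hu.sub_sq_div_le_supConv hp hp2 hε hAε x y)⟩

lemma HasGrowth.norm_sub_sq_le_of_supConv_eq (hp : 0 ≤ p) (hp2 : p ≤ 2) (hu : HasGrowth p A u)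
    (hε : 0 < ε) (hAε : 8 * A * ε ≤ 1) {x y : E} (hy : supConv ε u x = u y - ‖x - y‖ ^ 2 / ε) :
    ‖x - y‖ ^ 2 ≤ 10 * A * ε * (1 + ‖x‖) ^ p := by
  have hdist : ‖x - y‖ ^ 2 / (2 * ε) ≤ 5 * A * (1 + ‖x‖) ^ p := by
    linarith [hu.sub_sq_div_le hp hp2 hε hAε x y, hu.le_supConv hp hp2 hε hAε x,
      neg_le_of_abs_le (hu.abs_le x)]
  rw [div_le_iff₀ (by positivity)] at hdist
  linarith

lemma HasGrowth.eventually_eight_mul_le (hu : HasGrowth p A u) :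
    ∀ᶠ ε in 𝓝[>] (0 : ℝ), 0 < ε ∧ 8 * A * ε ≤ 1 := by
  have hA := hu.nonneg
  filter_upwards [Ioo_mem_nhdsGT (by positivity : (0 : ℝ) < 1 / (8 * A + 1))] with ε hε
  refine ⟨hε.1, ?_⟩
  have h := (lt_div_iff₀ (by positivity)).1 hε.2
  linarith [hε.1]

lemma HasGrowth.tendsto_supConv [ProperSpace E] (hp : 0 ≤ p) (hp2 : p ≤ 2)
    (hu : HasGrowth p A u) (hcont : Continuous u) (x : E) :
    Tendsto (fun ε => supConv ε u x) (𝓝[>] 0) (𝓝 (u x)) := by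
  have hmax : ∀ ε, ∃ y, 0 < ε ∧ 8 * A * ε ≤ 1 → supConv ε u x = u y - ‖x - y‖ ^ 2 / ε := fun ε => by
    by_cases h : 0 < ε ∧ 8 * A * ε ≤ 1
    · obtain ⟨y, hy⟩ := hu.exists_supConv_eq hp hp2 hcont h.1 h.2 x
      exact ⟨y, fun _ => hy⟩
    · exact ⟨0, fun h' => absurd h' h⟩
  choose Y hY using hmax
  have hYx : Tendsto Y (𝓝[>] 0) (𝓝 x) := by
    have hrate : Tendsto (fun ε : ℝ => √(10 * A * ε * (1 + ‖x‖) ^ p)) (𝓝[>] 0) (𝓝 0) := by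
      refine tendsto_nhdsWithin_of_tendsto_nhds ?_
      have h : Continuous fun ε : ℝ => √(10 * A * ε * (1 + ‖x‖) ^ p) := by fun_prop
      simpa only [mul_zero, zero_mul, Real.sqrt_zero] using h.tendsto 0
    refine tendsto_iff_norm_sub_tendsto_zero.2 (squeeze_zero' (.of_forall fun _ => norm_nonneg _)
      ?_ hrate)
    filter_upwards [hu.eventually_eight_mul_le] with ε hε
    rw [norm_sub_rev]
    exact Real.le_sqrt_of_sq_le
      (hu.norm_sub_sq_le_of_supConv_eq hp hp2 hε.1 hε.2 (hY ε hε))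
  refine tendsto_of_tendsto_of_tendsto_of_le_of_le' tendsto_const_nhds
    ((hcont.tendsto x).comp hYx) ?_ ?_
  · filter_upwards [hu.eventually_eight_mul_le] with ε hε
    exact hu.le_supConv hp hp2 hε.1 hε.2 x
  · filter_upwards [hu.eventually_eight_mul_le] with ε hε
    have hsq : 0 ≤ ‖x - Y ε‖ ^ 2 / ε := div_nonneg (sq_nonneg _) hε.1.le
    rw [Function.comp_apply, hY ε hε]
    linarith

end SupConvolution

/-- The (unnormalised) one-sided Marchaud derivative of order `σ` of `F` at `s`: up to a constant,
the fractional power `-(-d/ds)^σ` applied to `F`. Junk value `0` if the integral diverges. -/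
noncomputable def marchaud (σ : ℝ) (F : ℝ → ℝ) (s : ℝ) : ℝ :=
  ∫ t in Ioi 0, (F (s + t) - F s) * t ^ (-1 - σ)

section MarchaudHeatFlow

variable [MeasurableSpace V] [BorelSpace V] [FiniteDimensional ℝ V]
variable {σ p A c τ s : ℝ} {w : V → ℝ}

lemma measurable_heatFlow_add_sub_mul_rpow (hw : Measurable w) (σ s : ℝ) (x : V) :
    Measurable fun t => (heatFlow (s + t) w x - heatFlow s w x) * t ^ (-1 - σ) := by
  have hm : Measurable fun t => heatFlow (s + t) w x :=
    (measurable_uncurry_heatFlow hw).comp (by fun_prop : Measurable fun t : ℝ => (s + t, x))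
  fun_prop

variable (V) in
lemma exists_heatFlow_add_sub_bound_min (hp : 0 ≤ p) (hs : 0 < s) :
    ∃ B, ∀ {A : ℝ} {w : V → ℝ}, HasGrowth p A w → ∀ {t : ℝ}, 0 < t → ∀ x,
      |heatFlow (s + t) w x - heatFlow s w x| ≤
        B * (A * (1 + ‖x‖) ^ p) * (min t 1 * (1 + √t) ^ p) := by
  obtain ⟨C, hC, hsmall⟩ := exists_heatFlow_add_sub_bound V hp
  have hM := gaussianMoment_nonneg V p
  set C₁ := C * ((1 + √s) ^ p / s) with hC₁
  set C₂ := 2 * gaussianMoment V p * (1 + √s) ^ p with hC₂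
  have hC₁0 : 0 ≤ C₁ := by positivity
  have hC₂0 : 0 ≤ C₂ := by positivity
  refine ⟨C₁ + C₂, fun {A w} hw {t} ht x => ?_⟩
  set a := A * (1 + ‖x‖) ^ p
  have ha : 0 ≤ a := (abs_nonneg _).trans (hw.abs_le x)
  have hone : 1 ≤ (1 + √t) ^ p := Real.one_le_rpow (by linarith [Real.sqrt_nonneg t]) hp
  rcases le_total t 1 with h | h
  · rw [min_eq_left h]
    calc _ ≤ C₁ * a * (t * (1 + √t) ^ p) := (hsmall hw hs ht x).trans_eq (by rw [hC₁]; ring)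
      _ ≤ _ := by gcongr; linarith
  · have hsqrt : 1 + √(s + t) ≤ (1 + √s) * (1 + √t) := by
      have hadd : √(s + t) ≤ √s + √t := Real.sqrt_le_iff.2 ⟨by positivity, by
        nlinarith [Real.sq_sqrt hs.le, Real.sq_sqrt ht.le, Real.sqrt_nonneg s, Real.sqrt_nonneg t]⟩
      nlinarith [Real.sqrt_nonneg s, Real.sqrt_nonneg t]
    have hpow : (1 + √(s + t)) ^ p ≤ (1 + √s) ^ p * (1 + √t) ^ p := by
      rw [← Real.mul_rpow (by positivity) (by positivity)]
      exact Real.rpow_le_rpow (by positivity) hsqrt hp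
    have hpow' : (1 + √s) ^ p ≤ (1 + √s) ^ p * (1 + √t) ^ p :=
      le_mul_of_one_le_right (by positivity) hone
    rw [min_eq_right h, one_mul]
    calc _ ≤ |heatFlow (s + t) w x| + |heatFlow s w x| := abs_sub _ _
      _ ≤ a * ((1 + √(s + t)) ^ p * gaussianMoment V p) + a * ((1 + √s) ^ p * gaussianMoment V p) :=
        add_le_add (hw.abs_heatFlow_le hp (by positivity) x) (hw.abs_heatFlow_le hp hs x)
      _ ≤ a * ((1 + √s) ^ p * (1 + √t) ^ p * gaussianMoment V p) +
          a * ((1 + √s) ^ p * (1 + √t) ^ p * gaussianMoment V p) := by gcongr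
      _ = C₂ * a * (1 + √t) ^ p := by rw [hC₂]; ring
      _ ≤ _ := by gcongr; linarith

lemma HasGrowth.integrableOn_heatFlow_add_sub_mul_rpow (hσ : σ < 1) (hp : 0 ≤ p)
    (hpσ : p < 2 * σ) (hw : HasGrowth p A w) (hs : 0 < s) (x : V) :
    IntegrableOn (fun t => (heatFlow (s + t) w x - heatFlow s w x) * t ^ (-1 - σ)) (Ioi 0) := by
  obtain ⟨B, hbound⟩ := exists_heatFlow_add_sub_bound_min V hp hs
  refine ((integrableOn_Ioi_min_one_mul_rpow hσ hp hpσ).const_mul (B * (A * (1 + ‖x‖) ^ p))).mono'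
    (measurable_heatFlow_add_sub_mul_rpow hw.measurable σ s x).aestronglyMeasurable
    (ae_restrict_of_forall_mem measurableSet_Ioi fun t ht => ?_)
  have ht0 : 0 < t := ht
  rw [norm_mul, Real.norm_of_nonneg (by positivity : 0 ≤ t ^ (-1 - σ)), ← mul_assoc]
  exact mul_le_mul_of_nonneg_right (hbound hw ht0 x) (by positivity)

lemma tendsto_marchaud_heatFlow {ι : Type*} {l : Filter ι} [l.IsCountablyGenerated] (hσ : σ < 1)
    (hp : 0 ≤ p) (hpσ : p < 2 * σ) (hs : 0 < s) {W : ι → V → ℝ}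
    (hW : ∀ᶠ i in l, HasGrowth p A (W i)) (hlim : ∀ y, Tendsto (fun i => W i y) l (𝓝 (w y)))
    (x : V) :
    Tendsto (fun i => marchaud σ (fun r => heatFlow r (W i) x) s) l
      (𝓝 (marchaud σ (fun r => heatFlow r w x) s)) := by
  obtain ⟨B, hbound⟩ := exists_heatFlow_add_sub_bound_min V hp hs
  refine tendsto_integral_filter_of_dominated_convergence
    (fun t => B * (A * (1 + ‖x‖) ^ p) * (min t 1 * (1 + √t) ^ p * t ^ (-1 - σ))) ?_ ?_
    ((integrableOn_Ioi_min_one_mul_rpow hσ hp hpσ).const_mul _)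
    (ae_restrict_of_forall_mem measurableSet_Ioi fun t ht => ?_)
  · filter_upwards [hW] with i hi
    exact (measurable_heatFlow_add_sub_mul_rpow hi.measurable σ s x).aestronglyMeasurable
  · filter_upwards [hW] with i hi
    refine ae_restrict_of_forall_mem measurableSet_Ioi fun t ht => ?_
    have ht0 : 0 < t := ht
    rw [norm_mul, Real.norm_of_nonneg (by positivity : 0 ≤ t ^ (-1 - σ)), ← mul_assoc]
    exact mul_le_mul_of_nonneg_right (hbound hi ht0 x) (by positivity)
  · exact ((tendsto_heatFlow_of_hasGrowth hp hW hlim (add_pos hs ht) x).sub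
      (tendsto_heatFlow_of_hasGrowth hp hW hlim hs x)).mul_const _

lemma HasGrowth.tendsto_setIntegral_marchaud (hσ : σ < 1) (hp : 0 ≤ p) (hpσ : p < 2 * σ)
    (hw : HasGrowth p A w) (hs : 0 < s) (x : V) :
    Tendsto (fun τ => ∫ t in Ioi τ, (heatFlow (s + t) w x - heatFlow s w x) * t ^ (-1 - σ))
      (𝓝[>] 0) (𝓝 (marchaud σ (fun r => heatFlow r w x) s)) := by
  refine ((aecover_Ioi_of_Ioi (tendsto_id.mono_left nhdsWithin_le_nhds)
    ).integral_tendsto_of_countably_generated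
    (hw.integrableOn_heatFlow_add_sub_mul_rpow hσ hp hpσ hs x)).congr' ?_
  filter_upwards [self_mem_nhdsWithin] with τ hτ
  rw [id, Measure.restrict_restrict_of_subset (Ioi_subset_Ioi (le_of_lt hτ))]

lemma HasGrowth.abs_heatFlow_sub_le (hp : 0 ≤ p) (hw : HasGrowth p A w) {t : ℝ} (ht : 0 < t)
    (x : V) :
    |heatFlow t w x - w x| ≤ (gaussianMoment V p + 1) * (A * (1 + ‖x‖) ^ p) * (1 + √t) ^ p := by
  have ha : 0 ≤ A * (1 + ‖x‖) ^ p := (abs_nonneg _).trans (hw.abs_le x)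
  have hone : 1 ≤ (1 + √t) ^ p := Real.one_le_rpow (by linarith [Real.sqrt_nonneg t]) hp
  calc |heatFlow t w x - w x| ≤ |heatFlow t w x| + |w x| := abs_sub _ _
    _ ≤ A * (1 + ‖x‖) ^ p * ((1 + √t) ^ p * gaussianMoment V p) +
        A * (1 + ‖x‖) ^ p * (1 + √t) ^ p :=
      add_le_add (hw.abs_heatFlow_le hp ht x)
        ((hw.abs_le x).trans (le_mul_of_one_le_right ha hone))
    _ = _ := by ring

lemma HasGrowth.integrable_prod_heatFlow_sub (hp : 0 ≤ p) (hpσ : p < 2 * σ)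
    (hw : HasGrowth p A w) (hτ : 0 < τ) (hs : 0 < s) (x : V) :
    Integrable (Function.uncurry fun (y : V) t =>
        (heatFlow t w (x + y) - w (x + y)) * t ^ (-1 - σ) * heatKernel s y)
      (volume.prod (volume.restrict (Ioi τ))) := by
  have hM := gaussianMoment_nonneg V p
  have hA := hw.nonneg
  have hmw := hw.measurable
  have hm : Measurable fun a : V × ℝ => heatFlow a.2 w (x + a.1) :=
    (measurable_uncurry_heatFlow hmw).comp (by fun_prop : Measurable fun a : V × ℝ =>
      (a.2, x + a.1))
  have hgauss : Integrable fun y : V => (1 + ‖y‖) ^ p * heatKernel s y := by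
    simpa only [pow_zero, one_mul] using integrable_norm_pow_mul_heatKernel (V := V) hp 0 hs
  have hdom := (hgauss.mul_prod
    (integrableOn_Ioi_one_add_sqrt_rpow_mul_rpow hp hpσ hτ)).const_mul
      ((gaussianMoment V p + 1) * (A * (1 + ‖x‖) ^ p))
  have hτt : ∀ᵐ a : V × ℝ ∂volume.prod (volume.restrict (Ioi τ)), a.2 ∈ Ioi τ :=
    Measure.quasiMeasurePreserving_snd.ae (ae_restrict_mem measurableSet_Ioi)
  refine hdom.mono' (by unfold Function.uncurry; fun_prop) ?_
  filter_upwards [hτt] with a ha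
  have ht : 0 < a.2 := hτ.trans ha
  have hG := heatKernel_pos hs a.1
  rw [Function.uncurry, norm_mul, norm_mul, Real.norm_of_nonneg hG.le,
    Real.norm_of_nonneg (by positivity : 0 ≤ a.2 ^ (-1 - σ)), Real.norm_eq_abs]
  calc _ ≤ (gaussianMoment V p + 1) * (A * ((1 + ‖x‖) ^ p * (1 + ‖a.1‖) ^ p)) * (1 + √a.2) ^ p *
        a.2 ^ (-1 - σ) * heatKernel s a.1 := by
        gcongr
        refine (hw.abs_heatFlow_sub_le hp ht (x + a.1)).trans ?_
        gcongr
        exact one_add_norm_add_rpow_le hp x a.1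
    _ = _ := by ring

lemma HasGrowth.heatFlow_setIntegral_heatFlow_sub (hp : 0 ≤ p) (hpσ : p < 2 * σ)
    (hw : HasGrowth p A w) (hτ : 0 < τ) (hs : 0 < s) (x : V) :
    heatFlow s (fun y => ∫ t in Ioi τ, (heatFlow t w y - w y) * t ^ (-1 - σ)) x =
      ∫ t in Ioi τ, (heatFlow (s + t) w x - heatFlow s w x) * t ^ (-1 - σ) := by
  simp_rw [heatFlow.eq_def s (fun _ => ∫ _ in Ioi τ, _), ← integral_mul_const]
  rw [integral_integral_swap (hw.integrable_prod_heatFlow_sub hp hpσ hτ hs x)]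
  refine setIntegral_congr_fun measurableSet_Ioi fun t ht => ?_
  have ht0 : 0 < t := hτ.trans ht
  have hflow := hw.hasGrowth_heatFlow hp ht0
  calc ∫ y, (heatFlow t w (x + y) - w (x + y)) * t ^ (-1 - σ) * heatKernel s y
      = t ^ (-1 - σ) *
          ∫ y, (heatFlow t w (x + y) * heatKernel s y - w (x + y) * heatKernel s y) := by
        rw [← integral_const_mul]; congr 1 with y; ring
    _ = t ^ (-1 - σ) * (heatFlow s (heatFlow t w) x - heatFlow s w x) := by
        rw [integral_sub (hflow.integrable_mul_heatKernel hp hs x)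
          (hw.integrable_mul_heatKernel hp hs x)]
        rfl
    _ = _ := by rw [hw.heatFlow_heatFlow hp hs ht0, mul_comm]

lemma HasGrowth.le_setIntegral_heatFlow_add_sub (hp : 0 ≤ p) (hpσ : p < 2 * σ)
    (hw : HasGrowth p A w) (hτ : 0 < τ) (hs : 0 < s)
    (hc : ∀ y, c ≤ ∫ t in Ioi τ, (heatFlow t w y - w y) * t ^ (-1 - σ)) (x : V) :
    c ≤ ∫ t in Ioi τ, (heatFlow (s + t) w x - heatFlow s w x) * t ^ (-1 - σ) := by
  have hint : Integrable fun y => (∫ t in Ioi τ, (heatFlow t w (x + y) - w (x + y)) *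
      t ^ (-1 - σ)) * heatKernel s y := by
    simpa only [Function.uncurry, integral_mul_const] using
      (hw.integrable_prod_heatFlow_sub hp hpσ hτ hs x).integral_prod_left
  have hconst : ∫ y : V, c * heatKernel s y = c := by
    rw [integral_const_mul, integral_heatKernel hs, mul_one]
  rw [← hw.heatFlow_setIntegral_heatFlow_sub hp hpσ hτ hs x]
  refine hconst.ge.trans (integral_mono ((integrable_heatKernel hs).const_mul c) hint fun y =>
    mul_le_mul_of_nonneg_right (hc (x + y)) (heatKernel_pos hs y).le)

end MarchaudHeatFlow

section MarchaudMaximumPrinciple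

variable {σ s h : ℝ} {F : ℝ → ℝ}

lemma marchaud_neg (σ : ℝ) (F : ℝ → ℝ) (s : ℝ) :
    marchaud σ (fun r => -F r) s = -marchaud σ F s := by
  rw [marchaud, marchaud, ← integral_neg]
  congr 1 with t
  ring

lemma exists_forall_ge_le_of_tendsto_zero (hcont : ContinuousOn F (Ioi 0))
    (hlim : Tendsto F atTop (𝓝 0)) (hs : 0 < s) (hpos : 0 < F s) :
    ∃ s₁ ≥ s, 0 < F s₁ ∧ ∀ r ≥ s₁, F r ≤ F s₁ := by
  obtain ⟨S, hS⟩ := eventually_atTop.1 (hlim.eventually (gt_mem_nhds hpos))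
  obtain ⟨s₁, hs₁, hmax⟩ := isCompact_Icc.exists_isMaxOn (nonempty_Icc.2 (le_max_left s S))
    (hcont.mono fun r hr => hs.trans_le hr.1)
  have hle : F s ≤ F s₁ := hmax (left_mem_Icc.2 (le_max_left s S))
  refine ⟨s₁, hs₁.1, hpos.trans_le hle, fun r hr => ?_⟩
  rcases le_total r (max s S) with h | h
  · exact hmax ⟨hs₁.1.trans hr, h⟩
  · exact (hS r ((le_max_right _ _).trans h)).le.trans hle

lemma nonpos_of_marchaud_nonneg (hcont : ContinuousOn F (Ioi 0)) (hlim : Tendsto F atTop (𝓝 0))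
    (hint : ∀ s, 0 < s → IntegrableOn (fun t => (F (s + t) - F s) * t ^ (-1 - σ)) (Ioi 0))
    (hmarchaud : ∀ s, 0 < s → 0 ≤ marchaud σ F s) (hs : 0 < s) : F s ≤ 0 := by
  by_contra! hpos
  obtain ⟨s₁, hs₁, hpos₁, hmax⟩ := exists_forall_ge_le_of_tendsto_zero hcont hlim hs hpos
  have hs₁0 : 0 < s₁ := hs.trans_le hs₁
  have hsign : ∀ t ∈ Ioi (0 : ℝ), (F (s₁ + t) - F s₁) * t ^ (-1 - σ) ≤ 0 := fun t ht =>
    mul_nonpos_of_nonpos_of_nonneg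
      (sub_nonpos.2 (hmax _ (le_add_of_nonneg_right (le_of_lt ht))))
      (Real.rpow_nonneg (le_of_lt ht) _)
  have hzero : marchaud σ F s₁ = 0 :=
    (setIntegral_nonpos measurableSet_Ioi hsign).antisymm (hmarchaud s₁ hs₁0)
  have hae : ∀ᵐ t ∂volume.restrict (Ioi (0 : ℝ)), (F (s₁ + t) - F s₁) * t ^ (-1 - σ) = 0 :=
    ((setIntegral_eq_zero_iff_of_nonneg_ae (ae_restrict_of_forall_mem measurableSet_Ioi
      fun t ht => neg_nonneg.2 (hsign t ht)) (hint s₁ hs₁0).neg).1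
      (by simpa only [integral_neg, neg_eq_zero, marchaud] using hzero)).mono fun _ => neg_eq_zero.1
  have hconst : ∃ᶠ t in atTop, F (s₁ + t) = F s₁ := by
    refine frequently_atTop.2 fun T => ?_
    have hne : NeBot (ae (volume.restrict (Ioi (max T 0)))) := by
      rw [ae_neBot, Ne, Measure.restrict_eq_zero, Real.volume_Ioi]
      exact ENNReal.top_ne_zero
    obtain ⟨t, ht, htT⟩ := ((ae_restrict_of_ae_restrict_of_subset
      (Ioi_subset_Ioi (le_max_right T 0)) hae).and (ae_restrict_mem measurableSet_Ioi)).exists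
    have hweight := Real.rpow_pos_of_pos ((le_max_right T 0).trans_lt htT) (-1 - σ)
    exact ⟨t, (le_max_left T 0).trans (le_of_lt htT),
      sub_eq_zero.1 ((mul_eq_zero.1 ht).resolve_right hweight.ne')⟩
  have hshift : Tendsto (fun t => F (s₁ + t)) atTop (𝓝 0) :=
    hlim.comp (tendsto_atTop_add_const_left _ _ tendsto_id)
  exact hconst (hshift.eventually_ne hpos₁.ne)

lemma eq_of_marchaud_eq_zero (hcont : ContinuousOn F (Ioi 0))
    (hlim : ∀ h, 0 < h → Tendsto (fun s => F (s + h) - F s) atTop (𝓝 0))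
    (hint : ∀ s, 0 < s → IntegrableOn (fun t => (F (s + t) - F s) * t ^ (-1 - σ)) (Ioi 0))
    (hmarchaud : ∀ s, 0 < s → marchaud σ F s = 0) (hs : 0 < s) (hh : 0 < h) :
    F (s + h) = F s := by
  set d : ℝ → ℝ := fun s => F (s + h) - F s with hd
  have hdcont : ContinuousOn d (Ioi 0) :=
    (hcont.comp (by fun_prop) fun r hr => add_pos hr hh).sub hcont
  have hexpand (r t : ℝ) : (d (r + t) - d r) * t ^ (-1 - σ) =
      (F (r + h + t) - F (r + h)) * t ^ (-1 - σ) - (F (r + t) - F r) * t ^ (-1 - σ) := by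
    simp only [hd]
    rw [add_right_comm r t h]
    ring
  have hdint : ∀ r, 0 < r → IntegrableOn (fun t => (d (r + t) - d r) * t ^ (-1 - σ)) (Ioi 0) :=
    fun r hr => by
      simp_rw [hexpand]
      exact (hint (r + h) (add_pos hr hh)).sub (hint r hr)
  have hdmarchaud : ∀ r, 0 < r → marchaud σ d r = 0 := fun r hr => by
    simp_rw [marchaud, hexpand]
    rw [integral_sub (hint (r + h) (add_pos hr hh)) (hint r hr)]
    exact sub_eq_zero.2 ((hmarchaud _ (add_pos hr hh)).trans (hmarchaud r hr).symm)
  have hle : d s ≤ 0 :=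
    nonpos_of_marchaud_nonneg hdcont (hlim h hh) hdint (fun r hr => (hdmarchaud r hr).ge) hs
  have hge : -d s ≤ 0 := by
    refine nonpos_of_marchaud_nonneg (F := fun r => -d r) (σ := σ) hdcont.neg ?_
      (fun r hr => ?_) (fun r hr => ?_) hs
    · simpa only [neg_zero] using (hlim h hh).neg
    · refine (hdint r hr).neg.congr (.of_forall fun t => ?_)
      simp only [Pi.neg_apply]
      ring
    · rw [marchaud_neg, hdmarchaud r hr, neg_zero]
  linarith

end MarchaudMaximumPrinciple

section Stationarity

lemma exists_eq_inner_add_of_midpoint [CompleteSpace V] {u : V → ℝ} (hu : Continuous u)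
    (hmid : ∀ x h, u (x + h) + u (x - h) = 2 * u x) : ∃ q c, ∀ x, u x = ⟪q, x⟫ + c := by
  have hmidpoint (x y : V) : u (midpoint ℝ x y) = midpoint ℝ (u x) (u y) := by
    have hx : midpoint ℝ x y + (2⁻¹ : ℝ) • (x - y) = x := by
      rw [midpoint_eq_smul_add, invOf_eq_inv]; module
    have hy : midpoint ℝ x y - (2⁻¹ : ℝ) • (x - y) = y := by
      rw [midpoint_eq_smul_add, invOf_eq_inv]; module
    have h := hmid (midpoint ℝ x y) ((2⁻¹ : ℝ) • (x - y))
    rw [hx, hy] at h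
    rw [midpoint_eq_smul_add ℝ (u x) (u y), h, invOf_eq_inv, smul_eq_mul,
      inv_mul_cancel_left₀ two_ne_zero]
  let f : V →ᴬ[ℝ] ℝ := ⟨AffineMap.ofMapMidpoint u hmidpoint hu, hu⟩
  refine ⟨(InnerProductSpace.toDual ℝ V).symm f.contLinear, f 0, fun x => ?_⟩
  rw [InnerProductSpace.toDual_symm_apply]
  exact congr_fun f.decomp x

variable [MeasurableSpace V] [BorelSpace V] [FiniteDimensional ℝ V] {σ p A s : ℝ} {u : V → ℝ}

lemma HasGrowth.tendsto_heatFlow_add_sub_atTop (hp : 0 ≤ p) (hp2 : p < 2) (hu : HasGrowth p A u)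
    {h : ℝ} (hh : 0 < h) (x : V) :
    Tendsto (fun s => heatFlow (s + h) u x - heatFlow s u x) atTop (𝓝 0) := by
  obtain ⟨C, -, hbound⟩ := exists_heatFlow_add_sub_bound V hp
  have hlim := ((tendsto_one_add_sqrt_rpow_div_atTop hp hp2).const_mul
    (C * (A * (1 + ‖x‖) ^ p))).mul_const (h * (1 + √h) ^ p)
  rw [mul_zero, zero_mul] at hlim
  refine squeeze_zero_norm' ?_ hlim
  filter_upwards [eventually_gt_atTop 0] with s hs
  exact hbound hu hs hh x

lemma HasGrowth.heatFlow_eq_of_marchaud_eq_zero (hσ : σ < 1) (hp : 0 ≤ p) (hpσ : p < 2 * σ)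
    (hu : HasGrowth p A u) (hcont : Continuous u) {x : V}
    (hmarchaud : ∀ s, 0 < s → marchaud σ (fun r => heatFlow r u x) s = 0) (hs : 0 < s) :
    heatFlow s u x = u x := by
  refine tendsto_nhds_unique ?_ (hu.tendsto_heatFlow_zero hp hcont x)
  refine tendsto_const_nhds.congr' ?_
  filter_upwards [Ioo_mem_nhdsGT hs] with r hr
  have h := eq_of_marchaud_eq_zero (hu.continuousOn_heatFlow hp hcont x)
    (fun h hh => hu.tendsto_heatFlow_add_sub_atTop hp (by linarith) hh x)
    (fun r hr => hu.integrableOn_heatFlow_add_sub_mul_rpow hσ hp hpσ hr x) hmarchaud hr.1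
    (sub_pos.2 hr.2)
  simpa only [add_sub_cancel] using h

lemma HasGrowth.add_add_sub_eq_of_heatFlow_eq (hp : 0 ≤ p) (hp2 : p < 2) (hu : HasGrowth p A u)
    (hstat : ∀ s, 0 < s → ∀ x, heatFlow s u x = u x) (x h : V) :
    u (x + h) + u (x - h) = 2 * u x := by
  obtain ⟨C, -, hbound⟩ := exists_secondDiff_heatFlow_bound V hp
  have hlim := ((tendsto_one_add_sqrt_rpow_div_atTop hp hp2).const_mul
    (C * (A * (1 + ‖x‖) ^ p))).mul_const (‖h‖ ^ 2 * (1 + ‖h‖) ^ p)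
  rw [mul_zero, zero_mul] at hlim
  have hle : |u (x + h) + u (x - h) - 2 * u x| ≤ 0 := by
    refine ge_of_tendsto hlim ?_
    filter_upwards [eventually_gt_atTop 0] with s hs
    simpa only [hstat s hs] using hbound hu hs x h
  exact sub_eq_zero.1 (abs_nonpos_iff.1 hle)

end Stationarity

section Viscosity

variable {n : ℕ} {σ p A ε τ s : ℝ} {u : EuclideanSpace ℝ (Fin n) → ℝ}

/-- `Δ^σ u ≥ 0` in `ℝⁿ` in the viscosity sense; the existence of the principal value at every point
of contact is part of the notion. -/
def IsViscositySubsolution (n : ℕ) (σ : ℝ) (u : EuclideanSpace ℝ (Fin n) → ℝ) : Prop :=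
  ∀ y φ, TouchesAbove n u φ y →
    ∃ L : ℝ, Tendsto (truncatedFracLap n σ u y) (𝓝[>] 0) (𝓝 L) ∧ 0 ≤ L

/-- `Δ^σ u ≤ 0` in `ℝⁿ` in the viscosity sense; the existence of the principal value at every point
of contact is part of the notion. -/
def IsViscositySupersolution (n : ℕ) (σ : ℝ) (u : EuclideanSpace ℝ (Fin n) → ℝ) : Prop :=
  ∀ y φ, TouchesBelow n u φ y →
    ∃ L : ℝ, Tendsto (truncatedFracLap n σ u y) (𝓝[>] 0) (𝓝 L) ∧ L ≤ 0

lemma truncatedFracLap_neg (n : ℕ) (σ : ℝ) (u : EuclideanSpace ℝ (Fin n) → ℝ)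
    (y : EuclideanSpace ℝ (Fin n)) (δ : ℝ) :
    truncatedFracLap n σ (fun x => -u x) y δ = -truncatedFracLap n σ u y δ := by
  rw [truncatedFracLap, truncatedFracLap, ← integral_neg]
  congr 1 with x
  ring

lemma touchesBelow_neg_of_touchesAbove_neg {φ : EuclideanSpace ℝ (Fin n) → ℝ}
    {y : EuclideanSpace ℝ (Fin n)} (h : TouchesAbove n (fun x => -u x) φ y) :
    TouchesBelow n u (fun x => -φ x) y := by
  obtain ⟨hφ, hy, r, hr, hle⟩ := h
  exact ⟨hφ.neg, neg_eq_iff_eq_neg.2 hy, r, hr, fun x hx => neg_le.1 (hle x hx)⟩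

lemma IsViscositySupersolution.neg (h : IsViscositySupersolution n σ u) :
    IsViscositySubsolution n σ (fun x => -u x) := fun y _ hφ => by
  obtain ⟨L, hL, hL0⟩ := h y _ (touchesBelow_neg_of_touchesAbove_neg hφ)
  exact ⟨-L, hL.neg.congr fun δ => (truncatedFracLap_neg n σ u y δ).symm, neg_nonneg.2 hL0⟩

lemma truncatedFracLap_eq_integral_increment (n : ℕ) (σ : ℝ) (u : EuclideanSpace ℝ (Fin n) → ℝ)
    (y : EuclideanSpace ℝ (Fin n)) (δ : ℝ) :
    truncatedFracLap n σ u y δ = ∫ z, (ball 0 δ)ᶜ.indicator (fun z => u (y + z) - u y) z /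
      ‖z‖ ^ ((Module.finrank ℝ (EuclideanSpace ℝ (Fin n)) : ℝ) + 2 * σ) := by
  rw [truncatedFracLap, ← integral_indicator (measurableSet_le measurable_const (by fun_prop)),
    ← integral_add_left_eq_self _ y, finrank_euclideanSpace_fin]
  congr 1 with z
  by_cases hz : δ ≤ ‖z‖ <;> simp [hz]

lemma touchesAbove_of_forall_sub_sq_div_le {x Y : EuclideanSpace ℝ (Fin n)}
    (hmax : ∀ y, u y - ‖x - y‖ ^ 2 / ε ≤ u Y - ‖x - Y‖ ^ 2 / ε) :
    TouchesAbove n u (fun z => u Y - ‖x - Y‖ ^ 2 / ε + ‖x - z‖ ^ 2 / ε) Y :=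
  ⟨contDiff_const.add (((contDiff_const.sub contDiff_id).norm_sq ℝ).div_const ε),
    sub_add_cancel _ _, 1, one_pos, fun y _ => sub_le_iff_le_add.1 (hmax y)⟩

lemma increment_add_increment_neg_le_of_forall_sub_sq_div_le {x Y : EuclideanSpace ℝ (Fin n)}
    (hmax : ∀ y, u y - ‖x - y‖ ^ 2 / ε ≤ u Y - ‖x - Y‖ ^ 2 / ε) (z : EuclideanSpace ℝ (Fin n)) :
    (u (Y + z) - u Y) + (u (Y + -z) - u Y) ≤ 2 * (1 / ε) * ‖z‖ ^ 2 := by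
  have hplus := hmax (Y + z)
  have hminus := hmax (Y + -z)
  have hpar : ‖x - (Y + z)‖ ^ 2 / ε + ‖x - (Y + -z)‖ ^ 2 / ε =
      2 * (‖x - Y‖ ^ 2 / ε) + 2 * (1 / ε) * ‖z‖ ^ 2 := by
    rw [← sub_sub, ← sub_sub, sub_neg_eq_add, norm_sub_sq_real, norm_add_sq_real]
    ring
  linarith

lemma HasGrowth.increment_le_increment_supConv (hp : 0 ≤ p) (hp2 : p ≤ 2) (hu : HasGrowth p A u)
    (hε : 0 < ε) (hAε : 8 * A * ε ≤ 1) {x Y : EuclideanSpace ℝ (Fin n)}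
    (hY : supConv ε u x = u Y - ‖x - Y‖ ^ 2 / ε) (z : EuclideanSpace ℝ (Fin n)) :
    u (Y + z) - u Y ≤ supConv ε u (x + z) - supConv ε u x := by
  have h := hu.sub_sq_div_le_supConv hp hp2 hε hAε (x + z) (Y + z)
  rw [add_sub_add_right_eq_sub] at h
  linarith

lemma IsViscositySubsolution.neg_le_setIntegral_heatFlow_supConv_sub
    (h : IsViscositySubsolution n σ u) (hσ : σ ∈ Ioo 0 1) (hp : 0 ≤ p) (hpσ : p < 2 * σ)
    (hu : HasGrowth p A u) (hcont : Continuous u) (hε : 0 < ε) (hAε : 8 * A * ε ≤ 1)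
    (hτ : 0 < τ) (x : EuclideanSpace ℝ (Fin n)) :
    -(1 / ε * gaussianMoment (EuclideanSpace ℝ (Fin n)) 2 * (τ ^ (1 - σ) / (1 - σ))) ≤
      ∫ t in Ioi τ, (heatFlow t (supConv ε u) x - supConv ε u x) * t ^ (-1 - σ) := by
  have hp2 : p ≤ 2 := by linarith [hσ.2]
  obtain ⟨Y, hY⟩ := hu.exists_supConv_eq hp hp2 hcont hε hAε x
  have hmax (y) : u y - ‖x - y‖ ^ 2 / ε ≤ u Y - ‖x - Y‖ ^ 2 / ε :=
    hY ▸ hu.sub_sq_div_le_supConv hp hp2 hε hAε x y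
  obtain ⟨L, hL, hL0⟩ := h Y _ (touchesAbove_of_forall_sub_sq_div_le hmax)
  have hw := hu.hasGrowth_supConv hp hp2 hε hAε
  have hDu := hu.increment hp Y
  have hDw := hw.increment hp x
  have hupper := hDu.subordination_principalValue_le hσ hp hpσ
    (by rw [add_zero, sub_self]) (one_div_pos.2 hε).le hτ
    (increment_add_increment_neg_le_of_forall_sub_sq_div_le hmax)
    (hL.congr (truncatedFracLap_eq_integral_increment n σ u Y))
  have hmono : ∫ t in Ioi τ, heatFlow t (fun z => u (Y + z) - u Y) 0 * t ^ (-1 - σ) ≤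
      ∫ t in Ioi τ, heatFlow t (fun z => supConv ε u (x + z) - supConv ε u x) 0 * t ^ (-1 - σ) :=
    setIntegral_mono_on (hDu.integrableOn_Ioi_heatFlow_mul_rpow hp hpσ hτ)
      (hDw.integrableOn_Ioi_heatFlow_mul_rpow hp hpσ hτ) measurableSet_Ioi fun t ht =>
      mul_le_mul_of_nonneg_right (hDu.heatFlow_mono hp hDw (hτ.trans ht)
        (hu.increment_le_increment_supConv hp hp2 hε hAε hY) 0)
        (Real.rpow_nonneg (hτ.trans ht).le _)
  have hrewrite : ∫ t in Ioi τ,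
      heatFlow t (fun z => supConv ε u (x + z) - supConv ε u x) 0 * t ^ (-1 - σ) =
      ∫ t in Ioi τ, (heatFlow t (supConv ε u) x - supConv ε u x) * t ^ (-1 - σ) :=
    setIntegral_congr_fun measurableSet_Ioi fun t ht => by
      simp only [hw.heatFlow_increment hp (hτ.trans ht) x]
  have hL' : 0 ≤ subordinationConst (EuclideanSpace ℝ (Fin n)) σ * L :=
    mul_nonneg (subordinationConst_pos _ hσ.1).le hL0
  linarith

lemma IsViscositySubsolution.marchaud_heatFlow_supConv_nonneg (h : IsViscositySubsolution n σ u)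
    (hσ : σ ∈ Ioo 0 1) (hp : 0 ≤ p) (hpσ : p < 2 * σ) (hu : HasGrowth p A u)
    (hcont : Continuous u) (hε : 0 < ε) (hAε : 8 * A * ε ≤ 1) (hs : 0 < s)
    (x : EuclideanSpace ℝ (Fin n)) :
    0 ≤ marchaud σ (fun r => heatFlow r (supConv ε u) x) s := by
  have hw := hu.hasGrowth_supConv hp (by linarith [hσ.2]) hε hAε
  have hlower : Tendsto (fun τ : ℝ =>
      -(1 / ε * gaussianMoment (EuclideanSpace ℝ (Fin n)) 2 * (τ ^ (1 - σ) / (1 - σ))))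
      (𝓝[>] 0) (𝓝 0) := by
    have hexp : 0 < 1 - σ := sub_pos.2 hσ.2
    have hrpow := (Real.continuousAt_rpow_const 0 (1 - σ) (.inr hexp.le)).tendsto
    rw [Real.zero_rpow hexp.ne'] at hrpow
    simpa using (((hrpow.mono_left nhdsWithin_le_nhds).div_const (1 - σ)).const_mul
      (1 / ε * gaussianMoment (EuclideanSpace ℝ (Fin n)) 2)).neg
  refine le_of_tendsto_of_tendsto hlower (hw.tendsto_setIntegral_marchaud hσ.2 hp hpσ hs x) ?_
  filter_upwards [self_mem_nhdsWithin] with τ hτ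
  exact hw.le_setIntegral_heatFlow_add_sub hp hpσ hτ hs
    (h.neg_le_setIntegral_heatFlow_supConv_sub hσ hp hpσ hu hcont hε hAε hτ) x

lemma IsViscositySubsolution.marchaud_heatFlow_nonneg (h : IsViscositySubsolution n σ u)
    (hσ : σ ∈ Ioo 0 1) (hp : 0 ≤ p) (hpσ : p < 2 * σ) (hu : HasGrowth p A u)
    (hcont : Continuous u) (hs : 0 < s) (x : EuclideanSpace ℝ (Fin n)) :
    0 ≤ marchaud σ (fun r => heatFlow r u x) s := by
  have hp2 : p ≤ 2 := by linarith [hσ.2]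
  have hε := hu.eventually_eight_mul_le
  refine ge_of_tendsto (tendsto_marchaud_heatFlow hσ.2 hp hpσ hs
    (hε.mono fun ε hε => hu.hasGrowth_supConv hp hp2 hε.1 hε.2)
    (hu.tendsto_supConv hp hp2 hcont) x) ?_
  exact hε.mono fun ε hε =>
    h.marchaud_heatFlow_supConv_nonneg hσ hp hpσ hu hcont hε.1 hε.2 hs x

lemma IsViscositySubsolution.marchaud_heatFlow_eq_zero (hsub : IsViscositySubsolution n σ u)
    (hsuper : IsViscositySupersolution n σ u) (hσ : σ ∈ Ioo 0 1) (hp : 0 ≤ p) (hpσ : p < 2 * σ)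
    (hu : HasGrowth p A u) (hcont : Continuous u) (hs : 0 < s)
    (x : EuclideanSpace ℝ (Fin n)) : marchaud σ (fun r => heatFlow r u x) s = 0 := by
  refine le_antisymm ?_ (hsub.marchaud_heatFlow_nonneg hσ hp hpσ hu hcont hs x)
  have hneg := hsuper.neg.marchaud_heatFlow_nonneg hσ hp hpσ hu.neg hcont.neg hs x
  simp only [heatFlow_neg, marchaud_neg] at hneg
  exact neg_nonneg.1 hneg

end Viscosity

end FracLiouville

open FracLiouville in
theorem fracLap_liouville_general {n : ℕ} {σ p A : ℝ} (hσ : σ ∈ Ioo 0 1) (hp : 0 ≤ p)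
    (hpσ : p < 2 * σ) {u : EuclideanSpace ℝ (Fin n) → ℝ} (hcont : Continuous u)
    (hgrowth : ∀ x, |u x| ≤ A * (1 + ‖x‖) ^ p) (hsuper : IsViscositySupersolution n σ u)
    (hsub : IsViscositySubsolution n σ u) :
    ∃ (q : EuclideanSpace ℝ (Fin n)) (c : ℝ), ∀ x, u x = ⟪q, x⟫ + c := by
  have hu : HasGrowth p A u := ⟨hcont.measurable, hgrowth⟩
  have hstat (s : ℝ) (hs : 0 < s) (x : EuclideanSpace ℝ (Fin n)) : heatFlow s u x = u x :=
    hu.heatFlow_eq_of_marchaud_eq_zero hσ.2 hp hpσ hcont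
      (fun _ hr => hsub.marchaud_heatFlow_eq_zero hsuper hσ hp hpσ hu hcont hr x) hs
  exact exists_eq_inner_add_of_midpoint hcont
    (hu.add_add_sub_eq_of_heatFlow_eq hp (by linarith [hσ.2]) hstat)

/-- Liouville theorem for viscosity solutions of the fractional Laplacian, `σ > 1/2`:
a continuous viscosity solution of `(−Δ)^σ u = 0` in `ℝⁿ` growing at most like
`1 + |x|^{1+α}`, `0 < α < 2σ − 1`, is affine. -/
theorem fracLap_liouville (n : ℕ) (hn : 1 ≤ n) (σ α : ℝ)
    (hσ : σ ∈ Set.Ioo (1/2 : ℝ) 1) (hα : 0 < α) (hα' : α < 2 * σ - 1)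
    (u : EuclideanSpace ℝ (Fin n) → ℝ) (hu : Continuous u)
    (hgrowth : ∀ x, |u x| ≤ 1 + ‖x‖ ^ (1 + α))
    -- viscosity supersolution: at points touched from below, the principal value
    -- exists and is `≤ 0`
    (hsuper : ∀ y φ, TouchesBelow n u φ y →
      ∃ L : ℝ, Tendsto (truncatedFracLap n σ u y) (nhdsWithin 0 (Set.Ioi 0)) (𝓝 L) ∧ L ≤ 0)
    -- viscosity subsolution: at points touched from above, the principal value
    -- exists and is `≥ 0`
    (hsub : ∀ y φ, TouchesAbove n u φ y →
      ∃ L : ℝ, Tendsto (truncatedFracLap n σ u y) (nhdsWithin 0 (Set.Ioi 0)) (𝓝 L) ∧ 0 ≤ L) :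
    ∃ (p : EuclideanSpace ℝ (Fin n)) (c : ℝ), ∀ x, u x = ⟪p, x⟫ + c :=
  fracLap_liouville_general ⟨by linarith [hσ.1], hσ.2⟩ (by linarith) (by linarith) hu
    (fun x => (hgrowth x).trans (FracLiouville.one_add_norm_rpow_le_two_mul (by linarith) x))
    hsuper hsub
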